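/- Let f(x) = F₁(x') + ωF₂(x') ∈ GSR(Ω_D) and for k ∈ ℕ set A_k(x') = ((1/r)∂_r)^k F₁(x') and B_k(x') = (∂_r ∘ (1/r)·)^k F₂(x') (values at r = 0 understood as limits as r → 0). Then for all k ∈ ℕ and all x ∈ Ω_D: Δ_x^k f(x) = C_q(k)(A_k(x') + ω B_k(x')) and D_x Δ_x^k f(x) = −C_q(k+1) B_k(x')/r, where C_q(0) = 1 and C_q(k) = (q−1)(q−3)⋯(q−2k+1) for k ≥ 1. -/

import Mathlib

open scoped BigOperators
open Filter Topology

namespace GPSM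

variable (A : Type*) [NormedAddCommGroup A] [NormedSpace ℝ A] [Mul A] [One A]

/-- `A` is a real alternative algebra with unit `1`, of finite dimension `d > 1`,
equipped with an anti-involution `conj` (a real-linear map with `(a^c)^c = a`,
`(ab)^c = b^c a^c`, fixing the reals).  The associator is alternating (left/right
alternative laws). -/
structure IsAltStarAlg (conj : A → A) : Prop where
  finDim : FiniteDimensional ℝ A
  one_lt_finrank : 1 < Module.finrank ℝ A
  mul_add' : ∀ a b c : A, a * (b + c) = a * b + a * c
  add_mul' : ∀ a b c : A, (a + b) * c = a * c + b * c
  smul_mul' : ∀ (r : ℝ) (a b : A), (r • a) * b = r • (a * b)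
  mul_smul' : ∀ (r : ℝ) (a b : A), a * (r • b) = r • (a * b)
  one_mul' : ∀ a : A, 1 * a = a
  mul_one' : ∀ a : A, a * 1 = a
  alt_left : ∀ a b : A, a * (a * b) = a * a * b
  alt_right : ∀ a b : A, a * b * b = a * (b * b)
  conj_add : ∀ a b : A, conj (a + b) = conj a + conj b
  conj_smul : ∀ (r : ℝ) (a : A), conj (r • a) = r • conj a
  conj_conj : ∀ a : A, conj (conj a) = a
  conj_mul : ∀ a b : A, conj (a * b) = conj b * conj a
  conj_one : conj 1 = 1

/-- `v 0, v 1, …, v m` is a hypercomplex basis of the hypercomplex subspace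
`M = span(v 0, …, v m)` of `A`: `v 0 = 1`, `t(v s) = 0`, `n(v s) = 1`, the `v s`
anticommute for distinct `s, t ∈ {1,…,m}`, they are linearly independent, and
`M` is contained in the quadratic cone `Q_A`. -/
structure IsHypBasis (conj : A → A) (v : ℕ → A) (m : ℕ) : Prop where
  v_zero : v 0 = 1
  trace_zero : ∀ s, 1 ≤ s → s ≤ m → v s + conj (v s) = 0
  norm_one : ∀ s, 1 ≤ s → s ≤ m → v s * conj (v s) = 1
  anticomm : ∀ s t, 1 ≤ s → s ≤ m → 1 ≤ t → t ≤ m → s ≠ t → v s * v t = -(v t * v s)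
  indep : LinearIndependent ℝ (fun i : Fin (m + 1) => v i)
  mem_cone : ∀ x ∈ Submodule.span ℝ (Set.range fun i : Fin (m + 1) => v (i : ℕ)),
      ∃ tr nr : ℝ, x + conj x = tr • (1 : A) ∧ x * conj x = nr • (1 : A) ∧
        ((∃ r : ℝ, x = r • (1 : A)) ∨ tr ^ 2 < 4 * nr)

variable {A}

/-- Identification of `ℝ^{m+1}` with the hypercomplex subspace `M`:
`(x_0,…,x_m) ↦ Σ x_s • v s`. -/
def emb (v : ℕ → A) (m : ℕ) (x : Fin (m + 1) → ℝ) : A :=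
  ∑ s : Fin (m + 1), x s • v (s : ℕ)

/-- First `p+1` coordinates of a point of `M ≅ ℝ^{m+1}`, i.e. the `x_p`-part. -/
def projP (m p : ℕ) (x : Fin (m + 1) → ℝ) : Fin (p + 1) → ℝ := fun s =>
  if h : (s : ℕ) < m + 1 then x ⟨(s : ℕ), h⟩ else 0

/-- Inclusion `ℝ^{p+1} ⊆ ℝ^{m+1}` (remaining coordinates `0`). -/
def injP (m p : ℕ) (y : Fin (p + 1) → ℝ) : Fin (m + 1) → ℝ := fun s =>
  if h : (s : ℕ) < p + 1 then y ⟨(s : ℕ), h⟩ else 0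

/-- The coordinates of `x_q` (last `q = m - p` coordinates of `x`). -/
def xqpart (m p : ℕ) (x : Fin (m + 1) → ℝ) : Fin (m + 1) → ℝ := fun s =>
  if (s : ℕ) ≤ p then 0 else x s

/-- The coordinates of `x_p` inside `ℝ^{m+1}`. -/
def xppart (m p : ℕ) (x : Fin (m + 1) → ℝ) : Fin (m + 1) → ℝ := fun s =>
  if (s : ℕ) ≤ p then x s else 0

/-- `r = |x_q|`. -/
noncomputable def rad (m p : ℕ) (x : Fin (m + 1) → ℝ) : ℝ :=
  Real.sqrt (∑ s : Fin (m + 1), (xqpart m p x s) ^ 2)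

/-- `ω = x_q / |x_q|` (coordinates), `0` when `x_q = 0`. -/
noncomputable def normq (m p : ℕ) (x : Fin (m + 1) → ℝ) : Fin (m + 1) → ℝ :=
  (rad m p x)⁻¹ • xqpart m p x

/-- The reflection `x = x_p + x_q ↦ x_⋄ = x_p - x_q`. -/
def reflP (m p : ℕ) (x : Fin (m + 1) → ℝ) : Fin (m + 1) → ℝ := fun s =>
  if (s : ℕ) ≤ p then x s else -x s

/-- The sphere `𝕊 = {x_q ∈ span(v_{p+1},…,v_m) : x_q² = -1}`, in coordinates. -/
def Sph (v : ℕ → A) (m p : ℕ) : Set (Fin (m + 1) → ℝ) :=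
  {w | (∀ s : Fin (m + 1), (s : ℕ) ≤ p → w s = 0) ∧ emb v m w * emb v m w = -1}

/-- The point `x_p + r ω` of `M ≅ ℝ^{m+1}`. -/
def pt (m p : ℕ) (w : Fin (m + 1) → ℝ) (y : Fin (p + 1) → ℝ) (r : ℝ) :
    Fin (m + 1) → ℝ :=
  injP m p y + r • w

/-- The slice `Ω_ω ⊆ ℝ^{p+2}` of `Ω` at `ω`. -/
def sliceSet (m p : ℕ) (Ω : Set (Fin (m + 1) → ℝ)) (w : Fin (m + 1) → ℝ) :
    Set ((Fin (p + 1) → ℝ) × ℝ) := {z | pt m p w z.1 z.2 ∈ Ω}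

/-- The restriction `f_ω` of `f` to the slice at `ω`, as a function on `ℝ^{p+2}`. -/
def sliceFun (m p : ℕ) (f : (Fin (m + 1) → ℝ) → A) (w : Fin (m + 1) → ℝ) :
    (Fin (p + 1) → ℝ) × ℝ → A := fun z => f (pt m p w z.1 z.2)

/-- Partial derivative `∂_{x_s}` of a function on `ℝ^{m+1}`. -/
noncomputable def pdF (m : ℕ) (s : Fin (m + 1)) (f : (Fin (m + 1) → ℝ) → A)
    (x : Fin (m + 1) → ℝ) : A := fderiv ℝ f x (Pi.single s 1)

/-- Partial derivative `∂_{x_s}` of a function on `ℝ^{p+1}`. -/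
noncomputable def pdP (p : ℕ) (s : Fin (p + 1)) (g : (Fin (p + 1) → ℝ) → A)
    (y : Fin (p + 1) → ℝ) : A := fderiv ℝ g y (Pi.single s 1)

/-- Partial derivative `∂_{x_s}` of a function on `ℝ^{p+2} = ℝ^{p+1} × ℝ`. -/
noncomputable def pdSx (p : ℕ) (s : Fin (p + 1)) (G : (Fin (p + 1) → ℝ) × ℝ → A)
    (z : (Fin (p + 1) → ℝ) × ℝ) : A := fderiv ℝ G z (Pi.single s 1, 0)

/-- Partial derivative `∂_r` of a function on `ℝ^{p+2} = ℝ^{p+1} × ℝ`. -/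
noncomputable def pdSr (p : ℕ) (G : (Fin (p + 1) → ℝ) × ℝ → A)
    (z : (Fin (p + 1) → ℝ) × ℝ) : A := fderiv ℝ G z (0, 1)

/-- Second partial derivative `∂_r²`. -/
noncomputable def pdSr2 (p : ℕ) (G : (Fin (p + 1) → ℝ) × ℝ → A)
    (z : (Fin (p + 1) → ℝ) × ℝ) : A := pdSr p (pdSr p G) z

/-- The operator `Σ_{lo ≤ s ≤ hi} v_s ∂_{x_s}` on functions on `ℝ^{m+1}`.
`Dop v m 0 p` is `D_{x_p}`, `Dop v m (p+1) m` is `D_{x_q}`, `Dop v m 0 m` is `D_x`. -/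
noncomputable def Dop (v : ℕ → A) (m lo hi : ℕ) (f : (Fin (m + 1) → ℝ) → A)
    (x : Fin (m + 1) → ℝ) : A :=
  ∑ s : Fin (m + 1), if lo ≤ (s : ℕ) ∧ (s : ℕ) ≤ hi then v (s : ℕ) * pdF m s f x else 0

/-- The conjugate operator `∂_{x_0} - Σ_{1 ≤ s ≤ hi} v_s ∂_{x_s}` on functions on
`ℝ^{m+1}`; `Dbarop v m p` is `D̄_{x_p}`, `Dbarop v m m` is `D̄_x`. -/
noncomputable def Dbarop (v : ℕ → A) (m hi : ℕ) (f : (Fin (m + 1) → ℝ) → A)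
    (x : Fin (m + 1) → ℝ) : A :=
  pdF m 0 f x -
    ∑ s : Fin (m + 1), if 1 ≤ (s : ℕ) ∧ (s : ℕ) ≤ hi then v (s : ℕ) * pdF m s f x else 0

/-- The operator `D_{x_p} = Σ_{s=0}^p v_s ∂_{x_s}` on functions on `ℝ^{p+1}`. -/
noncomputable def DopP (v : ℕ → A) (p : ℕ) (g : (Fin (p + 1) → ℝ) → A)
    (y : Fin (p + 1) → ℝ) : A :=
  ∑ s : Fin (p + 1), v (s : ℕ) * pdP p s g y

/-- The operator `D̄_{x_p} = ∂_{x_0} - Σ_{s=1}^p v_s ∂_{x_s}` on functions on `ℝ^{p+1}`. -/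
noncomputable def DbaropP (v : ℕ → A) (p : ℕ) (g : (Fin (p + 1) → ℝ) → A)
    (y : Fin (p + 1) → ℝ) : A :=
  pdP p 0 g y - ∑ s : Fin (p + 1), if 1 ≤ (s : ℕ) then v (s : ℕ) * pdP p s g y else 0

/-- The operator `D_{x_p}` on functions on `ℝ^{p+2} = ℝ^{p+1} × ℝ`. -/
noncomputable def DopSx (v : ℕ → A) (p : ℕ) (G : (Fin (p + 1) → ℝ) × ℝ → A)
    (z : (Fin (p + 1) → ℝ) × ℝ) : A :=
  ∑ s : Fin (p + 1), v (s : ℕ) * pdSx p s G z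

/-- The operator `D̄_{x_p}` on functions on `ℝ^{p+2} = ℝ^{p+1} × ℝ`. -/
noncomputable def DbaropSx (v : ℕ → A) (p : ℕ) (G : (Fin (p + 1) → ℝ) × ℝ → A)
    (z : (Fin (p + 1) → ℝ) × ℝ) : A :=
  pdSx p 0 G z - ∑ s : Fin (p + 1), if 1 ≤ (s : ℕ) then v (s : ℕ) * pdSx p s G z else 0

/-- The Laplacian `Δ_x` on functions on `ℝ^{m+1}`. -/
noncomputable def lapF (m : ℕ) (f : (Fin (m + 1) → ℝ) → A)
    (x : Fin (m + 1) → ℝ) : A :=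
  ∑ s : Fin (m + 1), pdF m s (pdF m s f) x

/-- The Laplacian `Δ_{x_p}` on functions on `ℝ^{p+1}`. -/
noncomputable def lapP (p : ℕ) (g : (Fin (p + 1) → ℝ) → A)
    (y : Fin (p + 1) → ℝ) : A :=
  ∑ s : Fin (p + 1), pdP p s (pdP p s g) y

/-- Iterated Laplacian `Δ_x^k`. -/
noncomputable def lapIterF (m k : ℕ) (f : (Fin (m + 1) → ℝ) → A) :
    (Fin (m + 1) → ℝ) → A :=
  (fun g => lapF m g)^[k] f

/-- Iterated Laplacian `Δ_{x_p}^k`. -/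
noncomputable def lapIterP (p k : ℕ) (g : (Fin (p + 1) → ℝ) → A) :
    (Fin (p + 1) → ℝ) → A :=
  (fun h => lapP p h)^[k] g

/-- The Laplacian `Δ_{x'} = Δ_{x_p} + ∂_r²` on functions on `ℝ^{p+2}`. -/
noncomputable def lapSx (p : ℕ) (G : (Fin (p + 1) → ℝ) × ℝ → A)
    (z : (Fin (p + 1) → ℝ) × ℝ) : A :=
  (∑ s : Fin (p + 1), pdSx p s (pdSx p s G) z) + pdSr2 p G z

/-- The slice Cauchy-Riemann operator `D_ω = D_{x_p} + ω ∂_r` applied to a function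
on `ℝ^{p+2}`, where `ω` is given in coordinates by `w`. -/
noncomputable def DomCR (v : ℕ → A) (m p : ℕ) (w : Fin (m + 1) → ℝ)
    (G : (Fin (p + 1) → ℝ) × ℝ → A) (z : (Fin (p + 1) → ℝ) × ℝ) : A :=
  DopSx v p G z + emb v m w * pdSr p G z

/-- `f` is left generalized partial-slice monogenic (of type `(p, m-p)`) on `Ω`. -/
def GSM (v : ℕ → A) (m p : ℕ) (f : (Fin (m + 1) → ℝ) → A)
    (Ω : Set (Fin (m + 1) → ℝ)) : Prop :=
  ∀ w ∈ Sph v m p, ContDiffOn ℝ 1 (sliceFun m p f w) (sliceSet m p Ω w) ∧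
    ∀ z ∈ sliceSet m p Ω w, DomCR v m p w (sliceFun m p f w) z = 0

/-- `Ω` is partially symmetric with respect to `ℝ^{p+1}`. -/
def PSym (v : ℕ → A) (m p : ℕ) (Ω : Set (Fin (m + 1) → ℝ)) : Prop :=
  ∀ x ∈ Ω, ∀ w ∈ Sph v m p, xppart m p x + rad m p x • w ∈ Ω

/-- `Ω` is a slice domain: a domain meeting `ℝ^{p+1}` all of whose slices are
domains in `ℝ^{p+2}`. -/
def SliceDomain (v : ℕ → A) (m p : ℕ) (Ω : Set (Fin (m + 1) → ℝ)) : Prop :=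
  IsOpen Ω ∧ IsConnected Ω ∧ (∃ x ∈ Ω, xqpart m p x = 0) ∧
    ∀ w ∈ Sph v m p, IsConnected (sliceSet m p Ω w)

/-- The reflection `(x_p, r) ↦ (x_p, -r)` of `ℝ^{p+2}`. -/
def reflD (p : ℕ) (z : (Fin (p + 1) → ℝ) × ℝ) : (Fin (p + 1) → ℝ) × ℝ := (z.1, -z.2)

/-- The p-symmetric completion `Ω_D ⊆ M` of `D ⊆ ℝ^{p+2}`. -/
def OmegaD (v : ℕ → A) (m p : ℕ) (D : Set ((Fin (p + 1) → ℝ) × ℝ)) :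
    Set (Fin (m + 1) → ℝ) :=
  {x | ∃ w ∈ Sph v m p, ∃ z ∈ D, x = pt m p w z.1 z.2}

/-- `(F₁, F₂)` satisfies the even-odd (stem function) conditions on `D`. -/
def IsStem (p : ℕ) (D : Set ((Fin (p + 1) → ℝ) × ℝ))
    (F₁ F₂ : (Fin (p + 1) → ℝ) × ℝ → A) : Prop :=
  ∀ z ∈ D, F₁ (reflD p z) = F₁ z ∧ F₂ (reflD p z) = -F₂ z

/-- `f` is the generalized partial-slice function induced by the stem `(F₁, F₂)`:
`f(x_p + rω) = F₁(x_p, r) + ω F₂(x_p, r)`. -/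
def Induced (v : ℕ → A) (m p : ℕ) (D : Set ((Fin (p + 1) → ℝ) × ℝ))
    (F₁ F₂ : (Fin (p + 1) → ℝ) × ℝ → A) (f : (Fin (m + 1) → ℝ) → A) : Prop :=
  ∀ w ∈ Sph v m p, ∀ z ∈ D, f (pt m p w z.1 z.2) = F₁ z + emb v m w * F₂ z

/-- The generalized Cauchy-Riemann system for the stem `(F₁, F₂)` on `D`. -/
def StemCR (v : ℕ → A) (p : ℕ) (D : Set ((Fin (p + 1) → ℝ) × ℝ))
    (F₁ F₂ : (Fin (p + 1) → ℝ) × ℝ → A) : Prop :=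
  ∀ z ∈ D, DopSx v p F₁ z - pdSr p F₂ z = 0 ∧ DbaropSx v p F₂ z + pdSr p F₁ z = 0

/-- `f` is generalized partial-slice regular on `Ω_D`. -/
def MemGSR (v : ℕ → A) (m p : ℕ) (D : Set ((Fin (p + 1) → ℝ) × ℝ))
    (f : (Fin (m + 1) → ℝ) → A) : Prop :=
  ∃ F₁ F₂ : (Fin (p + 1) → ℝ) × ℝ → A, IsStem p D F₁ F₂ ∧
    ContDiffOn ℝ 1 F₁ D ∧ ContDiffOn ℝ 1 F₂ D ∧
    Induced v m p D F₁ F₂ f ∧ StemCR v p D F₁ F₂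

/-- `f` is a generalized partial-slice function on `Ω`. -/
def MemGS (v : ℕ → A) (m p : ℕ) (Ω : Set (Fin (m + 1) → ℝ))
    (f : (Fin (m + 1) → ℝ) → A) : Prop :=
  ∃ F₁ F₂ : (Fin (p + 1) → ℝ) × ℝ → A,
    (∀ z : (Fin (p + 1) → ℝ) × ℝ, F₁ (reflD p z) = F₁ z ∧ F₂ (reflD p z) = -F₂ z) ∧
    ∀ x ∈ Ω, f x = F₁ (projP m p x, rad m p x) +
      emb v m (normq m p x) * F₂ (projP m p x, rad m p x)

/-- Non-associative power: `a^n` with products taken from the right. -/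
def apow (a : A) (n : ℕ) : A := (fun b => a * b)^[n] 1

/-- Partial even part `PE[f](x) = (f(x) + f(x_⋄))/2`. -/
noncomputable def PE (m p : ℕ) (f : (Fin (m + 1) → ℝ) → A)
    (x : Fin (m + 1) → ℝ) : A := (2 : ℝ)⁻¹ • (f x + f (reflP m p x))

/-- Partial odd part `PO[f](x) = (f(x) - f(x_⋄))/2`. -/
noncomputable def PO (m p : ℕ) (f : (Fin (m + 1) → ℝ) → A)
    (x : Fin (m + 1) → ℝ) : A := (2 : ℝ)⁻¹ • (f x - f (reflP m p x))

/-- `Ω₀* = {x_p + x_q : x_p ∈ Ω₀, x_q ∈ ℝ^q}`. -/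
def Omega0star (m p : ℕ) (Ω₀ : Set (Fin (p + 1) → ℝ)) : Set (Fin (m + 1) → ℝ) :=
  {x | projP m p x ∈ Ω₀}

/-- The spherical derivative `f'_s(x) = (1/2) x_q⁻¹ (f(x) - f(x_⋄))`
(using `x_q⁻¹ = -x_q/|x_q|²`). -/
noncomputable def sder (v : ℕ → A) (m p : ℕ) (f : (Fin (m + 1) → ℝ) → A)
    (x : Fin (m + 1) → ℝ) : A :=
  -(((2 : ℝ) * rad m p x ^ 2)⁻¹) • (emb v m (xqpart m p x) * (f x - f (reflP m p x)))

/-- The spherical Dirac operator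
`Γ f = -(1/2) Σ_{p+1 ≤ i,j ≤ m} v_i (v_j (L_{ij} f))`. -/
noncomputable def sphericalGamma (v : ℕ → A) (m p : ℕ) (f : (Fin (m + 1) → ℝ) → A)
    (x : Fin (m + 1) → ℝ) : A :=
  -((2 : ℝ)⁻¹) • ∑ i : Fin (m + 1), ∑ j : Fin (m + 1),
    if p < (i : ℕ) ∧ p < (j : ℕ) then
      v (i : ℕ) * (v (j : ℕ) * (x i • pdF m j f x - x j • pdF m i f x)) else 0

/-- The slice Cauchy-Riemann operator `D_ω` applied to (the slice restriction of) a
function `f` on `M`, at the point `x` (with `ω = x_q/|x_q|`). -/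
noncomputable def DomCRat (v : ℕ → A) (m p : ℕ) (f : (Fin (m + 1) → ℝ) → A)
    (x : Fin (m + 1) → ℝ) : A :=
  DomCR v m p (normq m p x) (sliceFun m p f (normq m p x)) (projP m p x, rad m p x)

/-- `f` is left monogenic on `Ω`: `f ∈ C¹` and `D_x f = 0`. -/
def Monogenic (v : ℕ → A) (m : ℕ) (f : (Fin (m + 1) → ℝ) → A)
    (Ω : Set (Fin (m + 1) → ℝ)) : Prop :=
  ContDiffOn ℝ 1 f Ω ∧ ∀ x ∈ Ω, Dop v m 0 m f x = 0

/-- `f` is harmonic on `Ω`: `f ∈ C²` and `Δ_x f = 0`. -/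
def Harmonic (m : ℕ) (f : (Fin (m + 1) → ℝ) → A)
    (Ω : Set (Fin (m + 1) → ℝ)) : Prop :=
  ContDiffOn ℝ 2 f Ω ∧ ∀ x ∈ Ω, lapF m f x = 0

/-- A family of functions converges normally (locally a summable uniform bound). -/
def NormallyConvOn {E F : Type*} [TopologicalSpace E] [NormedAddCommGroup F]
    (u : ℕ → E → F) (s : Set E) : Prop :=
  ∀ x ∈ s, ∃ U ∈ nhds x, ∃ c : ℕ → ℝ, Summable c ∧ ∀ k : ℕ, ∀ y ∈ U, ‖u k y‖ ≤ c k

/-- The generalized partial-slice CK-extension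
`CK[f₀](x) = Σ_k (r^{2k}/(2k)!)(-Δ_{x_p})^k f₀(x_p)
  + ω Σ_k (r^{2k+1}/(2k+1)!)(-Δ_{x_p})^k (D_{x_p} f₀)(x_p)`. -/
noncomputable def CKe (v : ℕ → A) (m p : ℕ) (f₀ : (Fin (p + 1) → ℝ) → A)
    (x : Fin (m + 1) → ℝ) : A :=
  (∑' k : ℕ, (((-1 : ℝ) ^ k * rad m p x ^ (2 * k)) / (2 * k).factorial) •
      lapIterP p k f₀ (projP m p x)) +
  emb v m (normq m p x) *
    ∑' k : ℕ, (((-1 : ℝ) ^ k * rad m p x ^ (2 * k + 1)) / (2 * k + 1).factorial) •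
      lapIterP p k (DopP v p f₀) (projP m p x)

/-- The coefficient `Γ(q/2)(-1)^k r^{2k} / (2^{2k} k! Γ(k + q/2))`. -/
noncomputable def hgckC (q k : ℕ) (r : ℝ) : ℝ :=
  (Real.Gamma ((q : ℝ) / 2) * (-1) ^ k * r ^ (2 * k)) /
    (2 ^ (2 * k) * (k.factorial : ℝ) * Real.Gamma ((k : ℝ) + (q : ℝ) / 2))

/-- The coefficient `Γ(q/2)(-1)^k r^{2k} / (2^{2k+1} k! Γ(k + q/2 + 1))`. -/
noncomputable def gckC' (q k : ℕ) (r : ℝ) : ℝ :=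
  (Real.Gamma ((q : ℝ) / 2) * (-1) ^ k * r ^ (2 * k)) /
    (2 ^ (2 * k + 1) * (k.factorial : ℝ) * Real.Gamma ((k : ℝ) + (q : ℝ) / 2 + 1))

/-- The coefficient `Γ(q/2 + 1)(-1)^k r^{2k} / (2^{2k} k! Γ(k + q/2 + 1))`. -/
noncomputable def hgckC' (q k : ℕ) (r : ℝ) : ℝ :=
  (Real.Gamma ((q : ℝ) / 2 + 1) * (-1) ^ k * r ^ (2 * k)) /
    (2 ^ (2 * k) * (k.factorial : ℝ) * Real.Gamma ((k : ℝ) + (q : ℝ) / 2 + 1))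

/-- The monogenic generalized CK-extension `GCK[A₀]`. -/
noncomputable def GCKe (v : ℕ → A) (m p : ℕ) (A₀ : (Fin (p + 1) → ℝ) → A)
    (x : Fin (m + 1) → ℝ) : A :=
  (∑' k : ℕ, hgckC (m - p) k (rad m p x) • lapIterP p k A₀ (projP m p x)) +
  emb v m (xqpart m p x) *
    ∑' k : ℕ, gckC' (m - p) k (rad m p x) • lapIterP p k (DopP v p A₀) (projP m p x)

/-- The harmonic generalized CK-extension `HGCK[A₀, A₁]`. -/
noncomputable def HGCKe (v : ℕ → A) (m p : ℕ) (A₀ A₁ : (Fin (p + 1) → ℝ) → A)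
    (x : Fin (m + 1) → ℝ) : A :=
  (∑' k : ℕ, hgckC (m - p) k (rad m p x) • lapIterP p k A₀ (projP m p x)) +
  emb v m (xqpart m p x) *
    ∑' k : ℕ, hgckC' (m - p) k (rad m p x) • lapIterP p k A₁ (projP m p x)

/-- The operator `(1/r)∂_r`, extended to `r = 0` by its limit `∂_r²` (on even
functions). -/
noncomputable def T1 (p : ℕ) (G : (Fin (p + 1) → ℝ) × ℝ → A) :
    (Fin (p + 1) → ℝ) × ℝ → A := fun z =>
  if z.2 = 0 then pdSr2 p G z else (z.2)⁻¹ • pdSr p G z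

/-- The operator `∂_r ∘ (1/r)`, extended to `r = 0` by its limit `(1/2)∂_r²` (on odd
functions). -/
noncomputable def T2 (p : ℕ) (G : (Fin (p + 1) → ℝ) × ℝ → A) :
    (Fin (p + 1) → ℝ) × ℝ → A := fun z =>
  if z.2 = 0 then (2 : ℝ)⁻¹ • pdSr2 p G z
  else fderiv ℝ (fun t : ℝ => t⁻¹ • G (z.1, t)) z.2 1

/-- `C_q(k) = (q-1)(q-3)⋯(q-2k+1)`, `C_q(0) = 1`. -/
noncomputable def cq (q k : ℕ) : ℝ :=
  ∏ i ∈ Finset.range k, ((q : ℝ) - (2 * (i : ℝ) + 1))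

/-- Double factorial. -/
def dfac : ℕ → ℕ
  | 0 => 1
  | 1 => 1
  | n + 2 => (n + 2) * dfac n

/-- The Fueter-Sce constant `γ_q = (-1)^{(q-1)/2} (q-1)!!/(q-2)!!`. -/
noncomputable def gammaQ (q : ℕ) : ℝ :=
  (-1 : ℝ) ^ ((q - 1) / 2) * (dfac (q - 1) : ℝ) / (dfac (q - 2) : ℝ)




open MeasureTheory ContDiff in
theorem integrable_smul_of_tsupport {E V : Type*} [NormedAddCommGroup E] [NormedSpace ℝ E]
    [MeasurableSpace E] [BorelSpace E] [FiniteDimensional ℝ E]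
    [NormedAddCommGroup V] [NormedSpace ℝ V] {μ : Measure E} [IsFiniteMeasureOnCompacts μ]
    {D : Set E} {η : E → ℝ} {g : E → V}
    (hη : Continuous η) (hc : HasCompactSupport η) (hs : tsupport η ⊆ D) (hg : ContinuousOn g D) :
    Integrable (fun y => η y • g y) μ := by
  rw [← integrableOn_iff_integrable_of_support_subset (s := tsupport η)]
  · exact (hη.continuousOn.smul (hg.mono hs)).integrableOn_compact hc
  · intro y hy
    apply subset_tsupport
    intro h
    exact hy (by simp [h])

open ContDiff in
theorem contDiff_dir {E V : Type*} [NormedAddCommGroup E] [NormedSpace ℝ E]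
    [NormedAddCommGroup V] [NormedSpace ℝ V] {η : E → V} (h : ContDiff ℝ ∞ η) (a : E) :
    ContDiff ℝ ∞ (fun y => fderiv ℝ η y a) := by
  have := h.fderiv_right (m := ∞) (by simp)
  exact this.clm_apply contDiff_const

theorem tsupport_dir {E V : Type*} [NormedAddCommGroup E] [NormedSpace ℝ E]
    [NormedAddCommGroup V] [NormedSpace ℝ V] (η : E → V) (a : E) :
    tsupport (fun y => fderiv ℝ η y a) ⊆ tsupport η := by
  refine closure_minimal ?_ (isClosed_tsupport _)
  intro y hy
  apply support_fderiv_subset ℝ (f := η)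
  intro h
  exact hy (by simp [h])

theorem hasCompactSupport_dir {E V : Type*} [NormedAddCommGroup E] [NormedSpace ℝ E]
    [NormedAddCommGroup V] [NormedSpace ℝ V] {η : E → V} (h : HasCompactSupport η) (a : E) :
    HasCompactSupport (fun y => fderiv ℝ η y a) :=
  h.of_isClosed_subset (isClosed_tsupport _) (tsupport_dir η a)

open ContDiff in
theorem fderiv_dir_comm {E V : Type*} [NormedAddCommGroup E] [NormedSpace ℝ E]
    [NormedAddCommGroup V] [NormedSpace ℝ V] {η : E → V} {y : E} (h : ContDiffAt ℝ 2 η y) (a b : E) :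
    fderiv ℝ (fun y => fderiv ℝ η y a) y b = fderiv ℝ (fun y => fderiv ℝ η y b) y a := by
  have hd : DifferentiableAt ℝ (fderiv ℝ η) y :=
    (h.fderiv_right (m := 1) (by norm_num)).differentiableAt (by norm_num)
  have hsym := h.isSymmSndFDerivAt (by simp)
  have e : ∀ a b, fderiv ℝ (fun y => fderiv ℝ η y a) y b = fderiv ℝ (fderiv ℝ η) y b a := by
    intro a b
    rw [fderiv_clm_apply hd (differentiableAt_const _)]
    simp
  rw [e, e, hsym.eq]

open MeasureTheory ContDiff in
/-- the swap lemma -/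
theorem integral_swap {E V : Type*} [NormedAddCommGroup E] [NormedSpace ℝ E]
    [MeasurableSpace E] [BorelSpace E] [FiniteDimensional ℝ E]
    [NormedAddCommGroup V] [NormedSpace ℝ V] {μ : Measure E} [μ.IsAddHaarMeasure]
    {D : Set E} (hD : IsOpen D) {η : E → ℝ} {g : E → V}
    (hη : ContDiff ℝ ∞ η) (hc : HasCompactSupport η) (hs : tsupport η ⊆ D)
    (hg : ContDiffOn ℝ 1 g D) (a b : E) :
    ∫ y, fderiv ℝ η y a • fderiv ℝ g y b ∂μ = ∫ y, fderiv ℝ η y b • fderiv ℝ g y a ∂μ := by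
  have key : ∀ a b, ∫ y, fderiv ℝ η y a • fderiv ℝ g y b ∂μ =
      - ∫ y, fderiv ℝ (fun y => fderiv ℝ η y a) y b • g y ∂μ := by
    intro a b
    have hd := contDiff_dir hη a
    have hgd : ContinuousOn (fun y => fderiv ℝ g y b) D :=
      (hg.continuousOn_fderiv_of_isOpen hD le_rfl).clm_apply continuousOn_const
    have hc1 := hasCompactSupport_dir hc a
    have hs1 := (tsupport_dir η a).trans hs
    apply integral_smul_fderiv_eq_neg_fderiv_smul_of_integrable
    · exact integrable_smul_of_tsupport (contDiff_dir hd b).continuous (hasCompactSupport_dir hc1 b)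
        ((tsupport_dir _ b).trans hs1) hg.continuousOn
    · exact integrable_smul_of_tsupport hd.continuous hc1 hs1 hgd
    · exact integrable_smul_of_tsupport hd.continuous hc1 hs1 hg.continuousOn
    · intro x _
      exact hd.differentiable (by simp) x
    · intro x hx
      exact (hg.contDiffAt (hD.mem_nhds (hs1 hx))).differentiableAt (by simp)
  rw [key, key]
  congr 1
  apply integral_congr_ae
  filter_upwards with y
  rw [fderiv_dir_comm (hη.contDiffAt.of_le ENat.LEInfty.out)]

open ContDiff in
theorem exists_radial : ∃ g ψ : ℝ → ℝ, ContDiff ℝ ∞ g ∧ ContDiff ℝ ∞ ψ ∧ (∀ t, HasDerivAt g (ψ t) t) ∧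
    (∀ t, 0 ≤ ψ t) ∧ 0 < ψ 0 ∧ (∀ t, 1 ≤ t → g t = 0) ∧ (∀ t, 1 ≤ t → ψ t = 0) := by
  let ψ : ℝ → ℝ := fun t => expNegInvGlue (1 - t)
  have hψ : ContDiff ℝ ∞ ψ := expNegInvGlue.contDiff.comp (contDiff_const.sub contDiff_id)
  let g : ℝ → ℝ := fun t => ∫ u in (1:ℝ)..t, ψ u
  have hd : ∀ t, HasDerivAt g (ψ t) t := fun t =>
    intervalIntegral.integral_hasDerivAt_right (hψ.continuous.intervalIntegrable _ _)
      (hψ.continuous.stronglyMeasurableAtFilter _ _) hψ.continuous.continuousAt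
  refine ⟨g, ψ, ?_, hψ, hd, fun t => expNegInvGlue.nonneg _, expNegInvGlue.pos_of_pos (by norm_num),
    ?_, fun t ht => expNegInvGlue.zero_of_nonpos (by linarith)⟩
  · rw [contDiff_infty_iff_deriv]
    refine ⟨fun t => (hd t).differentiableAt, ?_⟩
    have : deriv g = ψ := funext fun t => (hd t).deriv
    rw [this]; exact hψ
  · intro t ht
    have : ∫ u in (1:ℝ)..t, ψ u = ∫ u in (1:ℝ)..t, (0:ℝ) := by
      apply intervalIntegral.integral_congr
      intro u hu
      rw [Set.uIcc_of_le ht] at hu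
      exact expNegInvGlue.zero_of_nonpos (by linarith [hu.1])
    simp [g, this]

open MeasureTheory ContDiff in
theorem weyl {E V ι : Type*} [NormedAddCommGroup E] [NormedSpace ℝ E]
    [MeasurableSpace E] [BorelSpace E] [FiniteDimensional ℝ E] [Fintype ι]
    [NormedAddCommGroup V] [NormedSpace ℝ V] [CompleteSpace V] (μ : Measure E) [μ.IsAddHaarMeasure]
    (b : Module.Basis ι ℝ E)
    {D : Set E} (hD : IsOpen D) {G : E → V} (hG : ContDiffOn ℝ 1 G D)
    (hw : ∀ η : E → ℝ, ContDiff ℝ ∞ η → HasCompactSupport η → tsupport η ⊆ D →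
      ∑ i, ∫ y, fderiv ℝ η y (b i) • fderiv ℝ G y (b i) ∂μ = 0) :
    ContDiffOn ℝ ∞ G D := by
  classical
  obtain ⟨g, ψ, hg, hψ, hgψ, hψ0, hψpos, hg1, hψ1⟩ := exists_radial
  let c : ι → (E →L[ℝ] ℝ) := fun i => LinearMap.toContinuousLinearMap (b.coord i)
  have hcb : ∀ y, ∑ i, c i y • b i = y := fun y => b.sum_repr y
  let N : E → ℝ := fun y => ∑ i, (c i y) ^ 2
  have hN : ContDiff ℝ ∞ N := by
    apply ContDiff.sum; intro i _
    exact (c i).contDiff.pow 2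
  -- bounded
  obtain ⟨R, hR0, hR⟩ : ∃ R > 0, ∀ y, N y ≤ 1 → ‖y‖ ≤ R := by
    refine ⟨∑ i, ‖b i‖ + 1, by positivity, fun y hy => ?_⟩
    conv_lhs => rw [← hcb y]
    refine (norm_sum_le _ _).trans ?_
    refine le_trans ?_ (le_add_of_nonneg_right zero_le_one)
    apply Finset.sum_le_sum
    intro i _
    rw [norm_smul]
    have h1 : (c i y) ^ 2 ≤ 1 := le_trans (Finset.single_le_sum (f := fun i => (c i y)^2)
      (fun i _ => sq_nonneg _) (Finset.mem_univ i)) hy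
    have : ‖c i y‖ ≤ 1 := by
      rw [Real.norm_eq_abs]; exact (sq_le_one_iff_abs_le_one _).1 h1
    nlinarith [norm_nonneg (b i)]
  let φ : E → ℝ := fun y => ψ (N y)
  let η : E → ℝ := fun y => g (N y)
  have hφ : ContDiff ℝ ∞ φ := hψ.comp hN
  have hη : ContDiff ℝ ∞ η := hg.comp hN
  have hsub : ∀ (h : ℝ → ℝ), (∀ t, 1 ≤ t → h t = 0) →
      tsupport (fun y => h (N y)) ⊆ {y | N y ≤ 1} := by
    intro h hh
    refine closure_minimal ?_ (isClosed_le hN.continuous continuous_const)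
    intro y hy
    by_contra h1
    exact hy (hh _ (not_le.1 h1).le)
  have hK : IsCompact {y | N y ≤ 1} := by
    refine (isCompact_closedBall (0:E) R).of_isClosed_subset
      (isClosed_le hN.continuous continuous_const) ?_
    intro y hy
    simpa using hR y hy
  have hφc : HasCompactSupport φ := hK.of_isClosed_subset (isClosed_tsupport _) (hsub ψ hψ1)
  have hηc : HasCompactSupport η := hK.of_isClosed_subset (isClosed_tsupport _) (hsub g hg1)
  have hηd : ∀ y i, fderiv ℝ η y (b i) = 2 * φ y * c i y := by
    intro y i
    have hNd : HasFDerivAt N (∑ j, (2 * c j y) • c j) y := by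
      refine HasFDerivAt.fun_sum fun j _ => ?_
      have := ((c j).hasFDerivAt (x := y)).pow 2
      refine this.congr_fderiv ?_
      ext w; simp
    have h1 : HasFDerivAt η (ψ (N y) • (∑ j, (2 * c j y) • c j)) y := (hgψ (N y)).comp_hasFDerivAt y hNd
    rw [h1.fderiv]
    have hcc : ∀ j, c j (b i) = if i = j then 1 else 0 := by
      intro j; simp [c, Module.Basis.coord_apply, b.repr_self, Finsupp.single_apply]
    simp [hcc, φ]
    ring
  have hI : 0 < ∫ y, φ y ∂μ := by
    refine hφ.continuous.integral_pos_of_hasCompactSupport_nonneg_nonzero hφc (fun y => hψ0 _)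
      (x := 0) ?_
    have : N 0 = 0 := by simp [N]
    simp only [φ, this]; exact hψpos.ne'
  intro z0 hz0
  apply ContDiffAt.contDiffWithinAt
  obtain ⟨ρ, hρ, hball⟩ : ∃ ρ > 0, Metric.closedBall z0 (3 * ρ) ⊆ D := by
    obtain ⟨e, he, h⟩ := Metric.nhds_basis_closedBall.mem_iff.1 (hD.mem_nhds hz0)
    exact ⟨e / 3, by positivity, by convert h using 2; ring⟩
  let χ : ContDiffBump z0 := ⟨2 * ρ, 3 * ρ, by positivity, by linarith⟩
  have hχ : ContDiff ℝ ∞ χ := χ.contDiff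
  have hχs : tsupport χ ⊆ D := by rw [χ.tsupport_eq]; exact hball
  let G' : E → V := fun y => χ y • G y
  have hG' : ContDiff ℝ 1 G' := by
    rw [contDiff_iff_contDiffAt]
    intro y
    by_cases hy : y ∈ tsupport χ
    · exact (hχ.contDiffAt.of_le (by exact_mod_cast le_top)).smul (hG.contDiffAt (hD.mem_nhds (hχs hy)))
    · have : G' =ᶠ[𝓝 y] fun _ => 0 := by
        filter_upwards [notMem_tsupport_iff_eventuallyEq.1 hy] with u hu
        simp [G', hu]
      exact contDiffAt_const.congr_of_eventuallyEq this
  have hG'c : HasCompactSupport G' := χ.hasCompactSupport.smul_right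
  have hGG' : ∀ y ∈ Metric.closedBall z0 (2 * ρ), G' y = G y := by
    intro y hy
    simp [G', χ.one_of_mem_closedBall hy]
  obtain ⟨C, hC⟩ : ∃ C, ∀ y, ‖fderiv ℝ G' y‖ ≤ C := by
    have : HasCompactSupport (fderiv ℝ G') := hG'c.fderiv ℝ
    exact this.exists_bound_of_continuous (hG'.continuous_fderiv one_ne_zero)
  let ε₀ : ℝ := ρ / (R + 1)
  have hε₀ : 0 < ε₀ := by positivity
  let h : E → ℝ → V := fun z ε => ∫ y, φ y • G' (z - ε • y) ∂μ
  have hder : ∀ z ε, HasDerivAt (h z) (∫ y, φ y • fderiv ℝ G' (z - ε • y) (-y) ∂μ) ε := by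
    intro z ε
    refine (hasDerivAt_integral_of_dominated_loc_of_deriv_le (F := fun ε y => φ y • G' (z - ε • y))
      (F' := fun ε y => φ y • fderiv ℝ G' (z - ε • y) (-y)) (s := Set.univ)
      (bound := fun y => φ y * (C * ‖y‖)) univ_mem ?_ ?_ ?_ ?_ ?_ ?_).2
    · filter_upwards with e
      refine Continuous.aestronglyMeasurable ?_
      exact hφ.continuous.smul (hG'.continuous.comp (by fun_prop))
    · refine Continuous.integrable_of_hasCompactSupport ?_ hφc.smul_right
      exact hφ.continuous.smul (hG'.continuous.comp (by fun_prop))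
    · refine Continuous.aestronglyMeasurable ?_
      exact hφ.continuous.smul (((hG'.continuous_fderiv one_ne_zero).comp (by fun_prop)).clm_apply (by fun_prop))
    · filter_upwards with y e _
      rw [norm_smul, Real.norm_of_nonneg (hψ0 _)]
      refine mul_le_mul_of_nonneg_left ?_ (hψ0 _)
      refine (ContinuousLinearMap.le_opNorm _ _).trans ?_
      rw [norm_neg]
      exact mul_le_mul_of_nonneg_right (hC _) (norm_nonneg _)
    · refine Continuous.integrable_of_hasCompactSupport ?_ hφc.mul_right
      exact hφ.continuous.mul (by fun_prop)
    · filter_upwards with y e _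
      refine HasDerivAt.const_smul (φ y) ?_
      have h1 : HasDerivAt (fun e : ℝ => z - e • y) (-y) e := by
        have := ((hasDerivAt_id e).smul_const y).const_sub z
        simpa using this
      exact ((hG'.differentiable (by simp) (z - e • y)).hasFDerivAt).comp_hasDerivAt e h1
  have hzero : ∀ z ∈ Metric.ball z0 ρ, ∀ ε ∈ Set.Ioo 0 ε₀,
      ∫ y, φ y • fderiv ℝ G' (z - ε • y) (-y) ∂μ = 0 := by
    intro z hz ε hε
    have hmem : ∀ y, N y ≤ 1 → z - ε • y ∈ Metric.ball z0 (2 * ρ) := by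
      intro y hy
      rw [Metric.mem_ball, dist_eq_norm] at hz ⊢
      have h1 : ‖ε • y‖ ≤ ρ := by
        rw [norm_smul, Real.norm_of_nonneg hε.1.le]
        calc ε * ‖y‖ ≤ ε₀ * (R + 1) := by
              refine mul_le_mul hε.2.le ((hR y hy).trans (by linarith)) (norm_nonneg _) hε₀.le
          _ = ρ := by simp only [ε₀]; field_simp
      calc ‖z - ε • y - z0‖ = ‖(z - z0) - ε • y‖ := by congr 1; abel
        _ ≤ ‖z - z0‖ + ‖ε • y‖ := norm_sub_le _ _
        _ < 2 * ρ := by linarith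
    let η' : E → ℝ := fun u => η (ε⁻¹ • (z - u))
    have hη' : ContDiff ℝ ∞ η' := hη.comp (by fun_prop)
    have hinv : ∀ u, z - ε • (ε⁻¹ • (z - u)) = u := by
      intro u; rw [smul_smul, mul_inv_cancel₀ hε.1.ne']; simp
    have hts : tsupport η' ⊆ {u | N (ε⁻¹ • (z - u)) ≤ 1} := by
      refine closure_minimal ?_ (isClosed_le (hN.continuous.comp (by fun_prop)) continuous_const)
      intro y hy
      by_contra h1
      exact hy (hg1 _ (not_le.1 h1).le)
    have hts2 : tsupport η' ⊆ Metric.ball z0 (2 * ρ) := by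
      intro u hu
      have := hmem _ (hts hu)
      rwa [hinv] at this
    have hη'c : HasCompactSupport η' :=
      (isCompact_closedBall z0 (2 * ρ)).of_isClosed_subset (isClosed_tsupport _)
        (hts2.trans Metric.ball_subset_closedBall)
    have hη'D : tsupport η' ⊆ D := hts2.trans (Metric.ball_subset_closedBall.trans
      ((Metric.closedBall_subset_closedBall (by linarith)).trans hball))
    have hw' := hw η' hη' hη'c hη'D
    have hGd : ∀ u ∈ tsupport η', fderiv ℝ G u = fderiv ℝ G' u := by
      intro u hu
      apply Filter.EventuallyEq.fderiv_eq
      filter_upwards [Metric.isOpen_ball.mem_nhds (hts2 hu)] with y hy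
      exact (hGG' y (Metric.ball_subset_closedBall hy)).symm
    have hη'd : ∀ u i, fderiv ℝ η' u (b i) = -ε⁻¹ * (2 * φ (ε⁻¹ • (z - u)) * c i (ε⁻¹ • (z - u))) := by
      intro u i
      have h1 : HasFDerivAt (fun u : E => ε⁻¹ • (z - u)) (ε⁻¹ • (-(ContinuousLinearMap.id ℝ E))) u :=
        ((hasFDerivAt_id u).const_sub z).const_smul ε⁻¹
      have h2 := ((hη.differentiable (by simp) (ε⁻¹ • (z - u))).hasFDerivAt).comp u h1
      have h3 : fderiv ℝ η' u (b i) = -ε⁻¹ * fderiv ℝ η (ε⁻¹ • (z - u)) (b i) := by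
        have h2' : HasFDerivAt η' _ u := h2
        rw [h2'.fderiv]
        simp
      rw [h3, hηd]
    -- the integral after the change of variables
    have hcv : ∫ y, φ y • fderiv ℝ G' (z - ε • y) (-y) ∂μ =
        |(ε ^ Module.finrank ℝ E)⁻¹| • ∫ u, φ (ε⁻¹ • (z - u)) • fderiv ℝ G' u (-(ε⁻¹ • (z - u))) ∂μ := by
      let T : E → V := fun u => φ (ε⁻¹ • u) • fderiv ℝ G' (z - u) (-(ε⁻¹ • u))
      have h1 : ∀ y, φ y • fderiv ℝ G' (z - ε • y) (-y) = T (ε • y) := by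
        intro y
        simp only [T, smul_smul, inv_mul_cancel₀ hε.1.ne', one_smul]
      simp_rw [h1]
      rw [Measure.integral_comp_smul, ← integral_sub_left_eq_self T μ z]
      congr 1
      simp [T]
    rw [hcv]
    have hsum : ∫ u, φ (ε⁻¹ • (z - u)) • fderiv ℝ G' u (-(ε⁻¹ • (z - u))) ∂μ
        = (ε / 2) • ∑ i, ∫ y, fderiv ℝ η' y (b i) • fderiv ℝ G y (b i) ∂μ := by
      rw [← integral_finsetSum, ← integral_smul]
      · congr 1
        ext u
        have h4 : ∀ i, fderiv ℝ η' u (b i) • fderiv ℝ G u (b i) =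
            fderiv ℝ η' u (b i) • fderiv ℝ G' u (b i) := by
          intro i
          by_cases hu : u ∈ tsupport η'
          · rw [hGd u hu]
          · have : fderiv ℝ η' u = 0 := by
              by_contra h0
              exact hu (support_fderiv_subset ℝ h0)
            simp [this]
        simp_rw [h4, hη'd]
        have h5 : -(ε⁻¹ • (z - u)) = ∑ i, (-(c i (ε⁻¹ • (z - u)))) • b i := by
          conv_lhs => rw [← hcb (ε⁻¹ • (z - u))]
          simp only [neg_smul, Finset.sum_neg_distrib]
        rw [h5, map_sum, Finset.smul_sum, Finset.smul_sum]
        apply Finset.sum_congr rfl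
        intro i _
        rw [map_smul, smul_smul, smul_smul]
        congr 1
        have := hε.1.ne'
        field_simp
      · intro i _
        refine integrable_smul_of_tsupport (contDiff_dir hη' _).continuous (hasCompactSupport_dir hη'c _)
          ((tsupport_dir _ _).trans hη'D) ?_
        exact (hG.continuousOn_fderiv_of_isOpen hD le_rfl).clm_apply continuousOn_const
    rw [hsum, hw']; simp
  have hconst : ∀ z ∈ Metric.ball z0 ρ, h z ε₀ = h z 0 := by
    intro z hz
    have h1 : ∀ δ ∈ Set.Ioo 0 ε₀, h z δ = h z ε₀ := by
      intro δ hδ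
      refine (constant_of_has_deriv_right_zero (a := δ) (b := ε₀) (f := h z) ?_ ?_ ε₀
        ⟨hδ.2.le, le_rfl⟩).symm
      · exact fun e _ => (hder z e).continuousAt.continuousWithinAt
      · intro e he
        have := hder z e
        rw [hzero z hz e ⟨hδ.1.trans_le he.1, he.2⟩] at this
        exact this.hasDerivWithinAt
    have h2 : Tendsto (h z) (𝓝[>] 0) (𝓝 (h z 0)) :=
      (hder z 0).continuousAt.tendsto.mono_left nhdsWithin_le_nhds
    have h3 : Tendsto (h z) (𝓝[>] 0) (𝓝 (h z ε₀)) := by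
      refine tendsto_const_nhds.congr' ?_
      filter_upwards [Ioo_mem_nhdsGT hε₀] with δ hδ
      exact (h1 δ hδ).symm
    exact tendsto_nhds_unique h3 h2
  let φ' : E → ℝ := fun y => φ (ε₀⁻¹ • y)
  have hφ' : ContDiff ℝ ∞ φ' := hφ.comp (by fun_prop)
  have hφ'c : HasCompactSupport φ' := hφc.comp_smul (inv_ne_zero hε₀.ne')
  have hconv : ∀ z, h z ε₀ = |(ε₀ ^ Module.finrank ℝ E)⁻¹| •
      (MeasureTheory.convolution φ' G' (ContinuousLinearMap.lsmul ℝ ℝ) μ z) := by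
    intro z
    have h1 : ∀ y, φ y • G' (z - ε₀ • y) = (fun u => φ' u • G' (z - u)) (ε₀ • y) := by
      intro y
      simp [φ', smul_smul, inv_mul_cancel₀ hε₀.ne']
    have h2 := Measure.integral_comp_smul μ (fun u => φ' u • G' (z - u)) ε₀
    simp only [h]
    rw [integral_congr_ae (Eventually.of_forall h1), h2]
    simp [convolution_def]
  have hsm : ContDiff ℝ ∞ (fun z => (∫ y, φ y ∂μ)⁻¹ • h z ε₀) := by
    simp_rw [hconv]
    refine ContDiff.const_smul _ (ContDiff.const_smul _ ?_)
    exact hφ'c.contDiff_convolution_left (n := ⊤) _ hφ' hG'.continuous.locallyIntegrable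
  refine hsm.contDiffAt.congr_of_eventuallyEq ?_
  filter_upwards [Metric.ball_mem_nhds z0 hρ] with z hz
  rw [hconst z hz]
  simp only [h, zero_smul, sub_zero]
  rw [integral_smul_const, smul_smul, inv_mul_cancel₀ hI.ne', one_smul, hGG']
  exact Metric.closedBall_subset_closedBall (by linarith) (Metric.ball_subset_closedBall hz)



open MeasureTheory ContDiff in
theorem contDiff_integral01_aux {E : Type} [NormedAddCommGroup E] [NormedSpace ℝ E]
    [FiniteDimensional ℝ E] (n : ℕ) : ∀ {V : Type*} [NormedAddCommGroup V] [NormedSpace ℝ V]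
    {K : E × ℝ → V} (_ : ContDiff ℝ ∞ K),
    ContDiff ℝ n (fun z => ∫ t in (0:ℝ)..1, K (z, t)) := by
  have hfd : ∀ {V : Type _} [NormedAddCommGroup V] [NormedSpace ℝ V]
    {K : E × ℝ → V} (_ : ContDiff ℝ ∞ K) (z : E), HasFDerivAt (fun z => ∫ t in (0:ℝ)..1, K (z, t))
      (∫ t in (0:ℝ)..1, (fderiv ℝ K (z, t)).comp (ContinuousLinearMap.inl ℝ E ℝ)) z := by
    intro V _ _ K hK z
    have hc' : Continuous (fun y : E × ℝ => (fderiv ℝ K y).comp (ContinuousLinearMap.inl ℝ E ℝ)) :=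
      (hK.continuous_fderiv (by simp)).clm_comp continuous_const
    obtain ⟨C, hC⟩ := ((isCompact_closedBall z 1).prod (isCompact_Icc (a := (0:ℝ)) (b := 1))).exists_bound_of_continuousOn
      hc'.continuousOn
    refine intervalIntegral.hasFDerivAt_integral_of_dominated_of_fderiv_le
      (F := fun z t => K (z, t))
      (F' := fun z t => (fderiv ℝ K (z, t)).comp (ContinuousLinearMap.inl ℝ E ℝ))
      (s := Metric.closedBall z 1) (bound := fun _ => C)
      (Metric.closedBall_mem_nhds z one_pos) ?_ ?_ ?_ ?_ ?_ ?_
    · filter_upwards with y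
      exact (hK.continuous.comp (by fun_prop)).aestronglyMeasurable
    · exact (hK.continuous.comp (by fun_prop)).intervalIntegrable _ _
    · exact (hc'.comp (by fun_prop : Continuous fun t : ℝ => (z, t))).aestronglyMeasurable
    · filter_upwards with t ht y hy
      rw [Set.uIoc_of_le zero_le_one] at ht
      exact hC (y, t) ⟨hy, ht.1.le, ht.2⟩
    · exact intervalIntegrable_const
    · filter_upwards with t ht y hy
      have h1 : HasFDerivAt (fun y : E => (y, t)) (ContinuousLinearMap.inl ℝ E ℝ) y :=
        hasFDerivAt_prodMk_left y t
      exact (hK.differentiable (by simp) (y, t)).hasFDerivAt.comp y h1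
  induction n with
  | zero =>
    intro V _ _ K hK
    rw [Nat.cast_zero, contDiff_zero]
    exact continuous_iff_continuousAt.2 fun z => (hfd hK z).continuousAt
  | succ n ih =>
    intro V _ _ K hK
    rw [Nat.cast_add, Nat.cast_one, contDiff_succ_iff_hasFDerivAt]
    refine ⟨_, ?_, hfd hK⟩
    refine ih (K := fun y => (fderiv ℝ K y).comp (ContinuousLinearMap.inl ℝ E ℝ)) ?_
    exact (hK.fderiv_right (m := ∞) (by simp)).clm_comp contDiff_const

open ContDiff in
theorem contDiff_integral01 {E : Type} [NormedAddCommGroup E] [NormedSpace ℝ E]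
    [FiniteDimensional ℝ E] {V : Type*} [NormedAddCommGroup V] [NormedSpace ℝ V]
    {K : E × ℝ → V} (hK : ContDiff ℝ ∞ K) :
    ContDiff ℝ ∞ (fun z => ∫ t in (0:ℝ)..1, K (z, t)) := by
  rw [contDiff_infty]
  intro n
  exact contDiff_integral01_aux n hK

section T
variable {V : Type*} [NormedAddCommGroup V] [NormedSpace ℝ V]

/-- quotient by `r` -/
noncomputable def Qd (p : ℕ) (O : (Fin (p + 1) → ℝ) × ℝ → V) (z : (Fin (p + 1) → ℝ) × ℝ) : V :=
  if z.2 = 0 then pdSr p O z else (z.2)⁻¹ • O z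

/-- even smooth functions -/
structure ES (p : ℕ) (D : Set ((Fin (p + 1) → ℝ) × ℝ)) (G : (Fin (p + 1) → ℝ) × ℝ → V) : Prop where
  smooth : ContDiffOn ℝ (⊤ : ℕ∞) G D
  even : ∀ z ∈ D, G (reflD p z) = G z

/-- odd smooth functions -/
structure OS (p : ℕ) (D : Set ((Fin (p + 1) → ℝ) × ℝ)) (G : (Fin (p + 1) → ℝ) × ℝ → V) : Prop where
  smooth : ContDiffOn ℝ (⊤ : ℕ∞) G D
  odd : ∀ z ∈ D, G (reflD p z) = -G z

open ContDiff in
theorem Qd_smooth [CompleteSpace V] {p : ℕ} {D : Set ((Fin (p + 1) → ℝ) × ℝ)} (hD : IsOpen D)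
    {O : (Fin (p + 1) → ℝ) × ℝ → V} (hO : ContDiffOn ℝ ∞ O D)
    (hO0 : ∀ z ∈ D, z.2 = 0 → O z = 0) : ContDiffOn ℝ ∞ (Qd p O) D := by
  intro z0 hz0
  apply ContDiffAt.contDiffWithinAt
  by_cases h0 : z0.2 = 0
  · obtain ⟨ρ, hρ, hball⟩ : ∃ ρ > 0, Metric.closedBall z0 (2 * ρ) ⊆ D := by
      obtain ⟨e, he, h⟩ := Metric.nhds_basis_closedBall.mem_iff.1 (hD.mem_nhds hz0)
      exact ⟨e / 2, by positivity, by convert h using 2; ring⟩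
    let χ : ContDiffBump z0 := ⟨ρ, 2 * ρ, by positivity, by linarith⟩
    have hχ : ContDiff ℝ ∞ χ := χ.contDiff
    have hχs : tsupport χ ⊆ D := by rw [χ.tsupport_eq]; exact hball
    let G' : (Fin (p + 1) → ℝ) × ℝ → V := fun y => χ y • O y
    have hG' : ContDiff ℝ ∞ G' := by
      rw [contDiff_iff_contDiffAt]
      intro y
      by_cases hy : y ∈ tsupport χ
      · exact hχ.contDiffAt.smul (hO.contDiffAt (hD.mem_nhds (hχs hy)))
      · have : G' =ᶠ[𝓝 y] fun _ => 0 := by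
          filter_upwards [notMem_tsupport_iff_eventuallyEq.1 hy] with u hu
          simp [G', hu]
        exact contDiffAt_const.congr_of_eventuallyEq this
    have hGG' : ∀ y ∈ Metric.ball z0 ρ, G' y = O y := by
      intro y hy
      simp [G', χ.one_of_mem_closedBall (Metric.ball_subset_closedBall hy)]
    let K : ((Fin (p + 1) → ℝ) × ℝ) × ℝ → V := fun y => fderiv ℝ G' (y.1.1, y.2 * y.1.2) (0, 1)
    have hK : ContDiff ℝ ∞ K := by
      refine ContDiff.clm_apply ?_ contDiff_const
      exact (hG'.fderiv_right (m := ∞) (by simp)).comp (by fun_prop)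
    have hI := contDiff_integral01 hK
    refine hI.contDiffAt.congr_of_eventuallyEq ?_
    filter_upwards [Metric.ball_mem_nhds z0 hρ] with z hz
    have hmem : ∀ t ∈ Set.Icc (0:ℝ) 1, (z.1, t * z.2) ∈ Metric.ball z0 ρ := by
      intro t ht
      rw [Metric.mem_ball, Prod.dist_eq, max_lt_iff] at hz ⊢
      refine ⟨hz.1, lt_of_le_of_lt ?_ hz.2⟩
      rw [h0]
      simp only [dist_zero_right, norm_mul, Real.norm_of_nonneg ht.1]
      exact mul_le_of_le_one_left (norm_nonneg _) ht.2
    unfold Qd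
    split_ifs with hz2
    · have h1 : ∀ t, K (z, t) = fderiv ℝ G' z (0, 1) := by
        intro t
        simp only [K, hz2, mul_zero]
        congr 2
        exact Prod.ext rfl hz2.symm
      simp only [h1]
      rw [intervalIntegral.integral_const, sub_zero, one_smul, pdSr]
      congr 1
      apply Filter.EventuallyEq.fderiv_eq
      filter_upwards [Metric.isOpen_ball.mem_nhds hz] with y hy
      exact (hGG' y hy).symm
    · have hd : ∀ t : ℝ, HasDerivAt (fun t : ℝ => G' (z.1, t * z.2)) (z.2 • K (z, t)) t := by
        intro t
        have h1 : HasDerivAt (fun t : ℝ => (z.1, t * z.2)) (0, z.2) t := by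
          refine (hasDerivAt_const t z.1).prodMk ?_
          simpa using (hasDerivAt_id t).mul_const z.2
        have h2 := (hG'.differentiable (by simp) (z.1, t * z.2)).hasFDerivAt.comp_hasDerivAt t h1
        have e : z.2 • K (z, t) = fderiv ℝ G' (z.1, t * z.2) (0, z.2) := by
          change z.2 • fderiv ℝ G' (z.1, t * z.2) (0, 1) = _
          rw [← map_smul]
          simp
        rw [e]
        exact h2
      have hKc : Continuous (fun t : ℝ => K (z, t)) := hK.continuous.comp (by fun_prop)
      have h3 := intervalIntegral.integral_eq_sub_of_hasDerivAt (a := 0) (b := 1) (fun t _ => hd t)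
        ((hKc.const_smul z.2).intervalIntegrable _ _)
      rw [intervalIntegral.integral_smul] at h3
      have h4 : G' (z.1, 0 * z.2) = 0 := by
        rw [hGG' _ (hmem 0 (by simp))]
        apply hO0
        · exact hball (Metric.closedBall_subset_closedBall (by linarith)
            (Metric.ball_subset_closedBall (hmem 0 (by simp))))
        · simp
      have h5 : G' (z.1, 1 * z.2) = O z := by rw [hGG' _ (hmem 1 (by simp))]; simp
      rw [h4, h5, sub_zero] at h3
      rw [← h3, smul_smul, inv_mul_cancel₀ hz2, one_smul]
  · have h1 : ContDiffAt ℝ ∞ (fun z : (Fin (p + 1) → ℝ) × ℝ => (z.2)⁻¹ • O z) z0 :=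
      (contDiffAt_snd.inv h0).smul (hO.contDiffAt (hD.mem_nhds hz0))
    refine h1.congr_of_eventuallyEq ?_
    have : {z : (Fin (p + 1) → ℝ) × ℝ | z.2 ≠ 0} ∈ 𝓝 z0 :=
      (isOpen_ne_fun continuous_snd continuous_const).mem_nhds h0
    filter_upwards [this] with z hz
    simp only [Qd]
    rw [if_neg hz]

end T


/-- the Clifford type relation between two families of operators -/
def CliffRel {V : Type*} [NormedAddCommGroup V] [NormedSpace ℝ V] {n : ℕ}
    (P Q : Fin n → V →L[ℝ] V) : Prop :=
  ∀ s t a, P s (Q t a) + P t (Q s a) = if s = t then (2 : ℝ) • a else 0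

theorem cliff_sum {V : Type*} [NormedAddCommGroup V] [NormedSpace ℝ V] {n : ℕ}
    {P Q : Fin n → V →L[ℝ] V} (h : CliffRel P Q) (M : Fin n → Fin n → V)
    (hM : ∀ s t, M s t = M t s) :
    ∑ s, P s (∑ t, Q t (M s t)) = ∑ s, M s s := by
  have h1 : (2 : ℝ) • ∑ s, P s (∑ t, Q t (M s t)) = (2 : ℝ) • ∑ s, M s s := by
    have e1 : ∑ s, P s (∑ t, Q t (M s t)) = ∑ s, ∑ t, P s (Q t (M s t)) := by
      simp only [map_sum]
    have e2 : ∑ s, P s (∑ t, Q t (M s t)) = ∑ s, ∑ t, P t (Q s (M s t)) := by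
      rw [e1, Finset.sum_comm]
      refine Finset.sum_congr rfl fun s _ => Finset.sum_congr rfl fun t _ => ?_
      rw [hM]
    rw [two_smul]
    nth_rewrite 1 [e1]
    rw [e2, ← Finset.sum_add_distrib]
    simp only [← Finset.sum_add_distrib]
    simp only [h _ _ _]
    simp [Finset.smul_sum]
  have := congrArg (fun y => (2 : ℝ)⁻¹ • y) h1
  simpa [smul_smul] using this

section W
variable {V : Type*} [NormedAddCommGroup V] [NormedSpace ℝ V] {p : ℕ}

open MeasureTheory ContDiff in
theorem weyl_CR [CompleteSpace V] {D : Set ((Fin (p + 1) → ℝ) × ℝ)} (hD : IsOpen D)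
    {P Q : Fin (p + 1) → V →L[ℝ] V} (hPQ : CliffRel P Q)
    {G K : (Fin (p + 1) → ℝ) × ℝ → V} (hG : ContDiffOn ℝ 1 G D) (hK : ContDiffOn ℝ 1 K D)
    {ε : ℝ} (hε : ε * ε = 1)
    (h1 : ∀ z ∈ D, pdSr p K z = ε • ∑ s, Q s (pdSx p s G z))
    (h2 : ∀ z ∈ D, pdSr p G z = -ε • ∑ s, P s (pdSx p s K z)) :
    ContDiffOn ℝ ∞ G D := by
  let b := (Pi.basisFun ℝ (Fin (p + 1))).prod (Module.Basis.singleton Unit ℝ)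
  have : (volume : Measure ((Fin (p + 1) → ℝ) × ℝ)).IsAddHaarMeasure :=
    Measure.prod.instIsAddHaarMeasure _ _
  refine weyl (volume : Measure ((Fin (p + 1) → ℝ) × ℝ)) b hD hG ?_
  intro η hη hc hs
  rw [Fintype.sum_sum_type]
  have b1 : ∀ s, b (Sum.inl s) = (Pi.single s 1, 0) := by
    intro s; ext <;> simp [b]
  have b2 : ∀ s, b (Sum.inr s) = (0, 1) := by
    intro s; ext <;> simp [b]
  simp only [b1, b2, Finset.univ_unique, Finset.sum_singleton]
  -- integrability
  have hintg : ∀ (L : (Fin (p + 1) → ℝ) × ℝ → V), ContDiffOn ℝ 1 L D → ∀ a c,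
      Integrable (fun y => fderiv ℝ η y a • fderiv ℝ L y c) := by
    intro L hL a c
    refine integrable_smul_of_tsupport (D := D) (contDiff_dir hη a).continuous
      (hasCompactSupport_dir hc a) ((tsupport_dir η a).trans hs) ?_
    exact (hL.continuousOn_fderiv_of_isOpen hD le_rfl).clm_apply continuousOn_const
  have hz : ∀ y ∉ D, ∀ a, fderiv ℝ η y a = 0 := by
    intro y hy a
    have : y ∉ tsupport (fun y => fderiv ℝ η y a) := fun h => hy (hs (tsupport_dir η a h))
    exact image_eq_zero_of_notMem_tsupport (f := fun y => fderiv ℝ η y a) this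
  have comb : ∀ (R : Fin (p + 1) → V →L[ℝ] V) (L : (Fin (p + 1) → ℝ) × ℝ → V), ContDiffOn ℝ 1 L D →
      ∀ (M : (Fin (p + 1) → ℝ) × ℝ → V) (δ : ℝ) (a : (Fin (p + 1) → ℝ) × ℝ),
      (∀ z ∈ D, pdSr p M z = δ • ∑ s, R s (pdSx p s L z)) →
      ∫ y, fderiv ℝ η y a • fderiv ℝ M y (0, 1) =
        δ • ∑ s, R s (∫ y, fderiv ℝ η y a • fderiv ℝ L y (Pi.single s 1, 0)) := by
    intro R L hL M δ a hM
    have e : ∀ y, fderiv ℝ η y a • fderiv ℝ M y (0, 1) =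
        δ • ∑ s, R s (fderiv ℝ η y a • fderiv ℝ L y (Pi.single s 1, 0)) := by
      intro y
      by_cases hy : y ∈ D
      · have := hM y hy
        simp only [pdSr, pdSx] at this
        rw [this, smul_comm, Finset.smul_sum]
        simp only [map_smul]
      · simp [hz y hy]
    simp only [e]
    rw [integral_smul, integral_finsetSum]
    · congr 1
      refine Finset.sum_congr rfl fun s _ => ?_
      rw [(R s).integral_comp_comm (hintg L hL _ _)]
    · intro s _
      exact (R s).integrable_comp (hintg L hL _ _)
  rw [comb P K hK G (-ε) _ h2]
  have e3 : ∀ s, ∫ y, fderiv ℝ η y (0, 1) • fderiv ℝ K y (Pi.single s 1, 0) =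
      ε • ∑ t, Q t (∫ y, fderiv ℝ η y (Pi.single s 1, 0) • fderiv ℝ G y (Pi.single t 1, 0)) := by
    intro s
    rw [integral_swap hD hη hc hs hK, comb Q G hG K ε _ h1]
  simp only [e3, map_smul]
  rw [← Finset.smul_sum, cliff_sum hPQ (fun s t => ∫ y, fderiv ℝ η y (Pi.single s 1, 0) • fderiv ℝ G y (Pi.single t 1, 0)) (fun s t => integral_swap hD hη hc hs hG _ _), smul_smul, neg_mul, hε]
  simp

end W


section T
variable {V : Type*} [NormedAddCommGroup V] [NormedSpace ℝ V] {p : ℕ}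
  {D : Set ((Fin (p + 1) → ℝ) × ℝ)}

open ContDiff

theorem ES.cda {G : (Fin (p + 1) → ℝ) × ℝ → V} (h : ES p D G) (hD : IsOpen D) {z} (hz : z ∈ D) :
    ContDiffAt ℝ ∞ G z := h.smooth.contDiffAt (hD.mem_nhds hz)

theorem OS.cda {G : (Fin (p + 1) → ℝ) × ℝ → V} (h : OS p D G) (hD : IsOpen D) {z} (hz : z ∈ D) :
    ContDiffAt ℝ ∞ G z := h.smooth.contDiffAt (hD.mem_nhds hz)

theorem ES.diff {G : (Fin (p + 1) → ℝ) × ℝ → V} (h : ES p D G) (hD : IsOpen D) {z} (hz : z ∈ D) :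
    DifferentiableAt ℝ G z := (h.cda hD hz).differentiableAt (by simp)

theorem OS.diff {G : (Fin (p + 1) → ℝ) × ℝ → V} (h : OS p D G) (hD : IsOpen D) {z} (hz : z ∈ D) :
    DifferentiableAt ℝ G z := (h.cda hD hz).differentiableAt (by simp)

theorem smooth_dir (hD : IsOpen D) {G : (Fin (p + 1) → ℝ) × ℝ → V} (h : ContDiffOn ℝ ∞ G D) (a) :
    ContDiffOn ℝ ∞ (fun z => fderiv ℝ G z a) D :=
  (h.fderiv_of_isOpen hD (m := ∞) (by simp)).clm_apply contDiffOn_const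

/-- the reflection as a continuous linear map -/
noncomputable def reflL (p : ℕ) : ((Fin (p + 1) → ℝ) × ℝ) →L[ℝ] ((Fin (p + 1) → ℝ) × ℝ) :=
  (ContinuousLinearMap.fst ℝ _ _).prod (-ContinuousLinearMap.snd ℝ _ _)

theorem reflL_apply (z) : reflL p z = reflD p z := rfl

theorem fderiv_refl (hD : IsOpen D) (hDr : ∀ z ∈ D, reflD p z ∈ D)
    {G : (Fin (p + 1) → ℝ) × ℝ → V} (h : ContDiffOn ℝ ∞ G D) {ε : ℝ}
    (he : ∀ z ∈ D, G (reflD p z) = ε • G z) {z} (hz : z ∈ D) (a) :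
    fderiv ℝ G (reflD p z) (reflD p a) = ε • fderiv ℝ G z a := by
  have h1 : DifferentiableAt ℝ G (reflD p z) :=
    (h.contDiffAt (hD.mem_nhds (hDr z hz))).differentiableAt (by simp)
  have h1' : DifferentiableAt ℝ G z :=
    (h.contDiffAt (hD.mem_nhds hz)).differentiableAt (by simp)
  have h2 : HasFDerivAt (fun z => G (reflL p z)) ((fderiv ℝ G (reflD p z)).comp (reflL p)) z :=
    HasFDerivAt.comp z (g := G) h1.hasFDerivAt (reflL p).hasFDerivAt
  have h3 : (fun z => G (reflL p z)) =ᶠ[𝓝 z] fun z => ε • G z := by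
    filter_upwards [hD.mem_nhds hz] with y hy
    exact he y hy
  have h4 := h3.fderiv_eq (𝕜 := ℝ)
  rw [h2.fderiv, fderiv_fun_const_smul (𝕜 := ℝ) h1' ε] at h4
  have := congrArg (fun L => L a) h4
  simpa [reflL_apply] using this

theorem ES.zero_of_odd {G : (Fin (p + 1) → ℝ) × ℝ → V} {z : (Fin (p + 1) → ℝ) × ℝ} (h : OS p D G) (hz : z ∈ D) (h0 : z.2 = 0) :
    G z = 0 := by
  have := h.odd z hz
  have e : reflD p z = z := by ext <;> simp [reflD, h0]
  rw [e] at this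
  have h2 : (2 : ℝ) • G z = 0 := by
    rw [two_smul]
    nth_rewrite 1 [this]
    simp
  exact (smul_eq_zero.1 h2).resolve_left two_ne_zero

theorem ES.pdSr (hD : IsOpen D) (hDr : ∀ z ∈ D, reflD p z ∈ D)
    {G : (Fin (p + 1) → ℝ) × ℝ → V} (h : ES p D G) : OS p D (pdSr p G) := by
  refine ⟨smooth_dir hD h.smooth _, fun z hz => ?_⟩
  have := fderiv_refl hD hDr h.smooth (ε := 1) (by simpa using h.even) hz (0, -1)
  simp only [reflD, neg_neg, one_smul] at this
  unfold GPSM.pdSr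
  rw [reflD, this, ← map_neg]
  simp

theorem ES.pdSx (hD : IsOpen D) (hDr : ∀ z ∈ D, reflD p z ∈ D)
    {G : (Fin (p + 1) → ℝ) × ℝ → V} (h : ES p D G) (s) : ES p D (pdSx p s G) := by
  refine ⟨smooth_dir hD h.smooth _, fun z hz => ?_⟩
  have := fderiv_refl hD hDr h.smooth (ε := 1) (by simpa using h.even) hz (Pi.single s 1, 0)
  simp only [reflD, one_smul, neg_zero] at this
  unfold GPSM.pdSx
  rw [reflD, this]

theorem OS.Qd [CompleteSpace V] (hD : IsOpen D)
    {G : (Fin (p + 1) → ℝ) × ℝ → V} (h : OS p D G) (hDr : ∀ z ∈ D, reflD p z ∈ D) : ES p D (Qd p G) := by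
  refine ⟨Qd_smooth hD h.smooth fun z hz h0 => ES.zero_of_odd h hz h0, fun z hz => ?_⟩
  unfold GPSM.Qd
  by_cases h0 : z.2 = 0
  · have e : reflD p z = z := by ext <;> simp [reflD, h0]
    rw [e]
  · rw [if_neg h0, if_neg (by simpa [reflD] using h0), h.odd z hz]
    simp [reflD]

theorem OS.eq_smul {G : (Fin (p + 1) → ℝ) × ℝ → V} {z : (Fin (p + 1) → ℝ) × ℝ} (h : OS p D G) (hz : z ∈ D) :
    G z = z.2 • GPSM.Qd p G z := by
  unfold GPSM.Qd
  split_ifs with h0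
  · rw [h0, zero_smul]; exact ES.zero_of_odd h hz h0
  · rw [smul_smul, mul_inv_cancel₀ h0, one_smul]

theorem T1_eq (G : (Fin (p + 1) → ℝ) × ℝ → V) : T1 p G = Qd p (pdSr p G) := rfl

theorem ES.T1 [CompleteSpace V] (hD : IsOpen D) (hDr : ∀ z ∈ D, reflD p z ∈ D)
    {G : (Fin (p + 1) → ℝ) × ℝ → V} (h : ES p D G) : ES p D (T1 p G) := by
  rw [T1_eq]
  exact (h.pdSr hD hDr).Qd hD hDr

theorem ES.pdSr_eq (hD : IsOpen D) (hDr : ∀ z ∈ D, reflD p z ∈ D)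
    {G : (Fin (p + 1) → ℝ) × ℝ → V} (h : ES p D G) {z} (hz : z ∈ D) :
    GPSM.pdSr p G z = z.2 • GPSM.T1 p G z := (h.pdSr hD hDr).eq_smul hz

/-- cancellation of `r` by density -/
theorem cancel_r (hD : IsOpen D) {K₁ K₂ : (Fin (p + 1) → ℝ) × ℝ → V}
    (h1 : ContinuousOn K₁ D) (h2 : ContinuousOn K₂ D)
    (h : ∀ z ∈ D, z.2 • K₁ z = z.2 • K₂ z) {z} (hz : z ∈ D) : K₁ z = K₂ z := by
  by_cases h0 : z.2 = 0
  · have hc : Tendsto (fun t : ℝ => ((z.1, t) : (Fin (p + 1) → ℝ) × ℝ)) (𝓝[≠] 0) (𝓝 z) := by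
      have : Continuous (fun t : ℝ => ((z.1, t) : (Fin (p + 1) → ℝ) × ℝ)) := by fun_prop
      have h3 := this.tendsto 0
      have e : ((z.1, 0) : (Fin (p + 1) → ℝ) × ℝ) = z := Prod.ext rfl h0.symm
      rw [e] at h3
      exact h3.mono_left nhdsWithin_le_nhds
    have t1 := (h1.continuousAt (hD.mem_nhds hz)).tendsto.comp hc
    have t2 := (h2.continuousAt (hD.mem_nhds hz)).tendsto.comp hc
    refine tendsto_nhds_unique (t1.congr' ?_) t2
    filter_upwards [hc.eventually (hD.mem_nhds hz), self_mem_nhdsWithin] with t ht ht0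
    have := h _ ht
    exact smul_right_injective V (r := t) ht0 this
  · exact smul_right_injective V (r := z.2) h0 (h z hz)

theorem pdSr_congr (hD : IsOpen D) {G K : (Fin (p + 1) → ℝ) × ℝ → V} (h : ∀ z ∈ D, G z = K z)
    {z} (hz : z ∈ D) : pdSr p G z = pdSr p K z := by
  have : G =ᶠ[𝓝 z] K := by
    filter_upwards [hD.mem_nhds hz] with y hy using h y hy
  rw [pdSr, pdSr, this.fderiv_eq]

theorem pdSx_congr (hD : IsOpen D) {G K : (Fin (p + 1) → ℝ) × ℝ → V} (h : ∀ z ∈ D, G z = K z)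
    {z} (hz : z ∈ D) (s) : pdSx p s G z = pdSx p s K z := by
  have : G =ᶠ[𝓝 z] K := by
    filter_upwards [hD.mem_nhds hz] with y hy using h y hy
  rw [pdSx, pdSx, this.fderiv_eq]

theorem T1_congr (hD : IsOpen D) {G K : (Fin (p + 1) → ℝ) × ℝ → V} (h : ∀ z ∈ D, G z = K z)
    {z} (hz : z ∈ D) : T1 p G z = T1 p K z := by
  rw [T1_eq, T1_eq, Qd, Qd, pdSr_congr hD h hz,
    pdSr_congr hD (fun y hy => pdSr_congr hD h hy) hz]

theorem ES.congr {G K : (Fin (p + 1) → ℝ) × ℝ → V} (hG : ES p D G) (h : ∀ z ∈ D, K z = G z)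
    (hDr : ∀ z ∈ D, reflD p z ∈ D) : ES p D K :=
  ⟨hG.smooth.congr h, fun z hz => by rw [h z hz, h _ (hDr z hz), hG.even z hz]⟩

theorem ES.clm {G : (Fin (p + 1) → ℝ) × ℝ → V} (hG : ES p D G) (J : V →L[ℝ] V) :
    ES p D (fun z => J (G z)) :=
  ⟨J.contDiff.comp_contDiffOn hG.smooth, fun z hz => by rw [hG.even z hz]⟩

theorem ES.sum {ι : Type*} [Fintype ι] {G : ι → (Fin (p + 1) → ℝ) × ℝ → V} (hG : ∀ i, ES p D (G i)) :
    ES p D (fun z => ∑ i, G i z) :=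
  ⟨ContDiffOn.sum fun i _ => (hG i).smooth,
    fun z hz => Finset.sum_congr rfl fun i _ => (hG i).even z hz⟩

theorem ES.smul {G : (Fin (p + 1) → ℝ) × ℝ → V} (hG : ES p D G) (c : ℝ) :
    ES p D (fun z => c • G z) :=
  ⟨hG.smooth.const_smul c, fun z hz => by rw [hG.even z hz]⟩

theorem ES.add {G K : (Fin (p + 1) → ℝ) × ℝ → V} (hG : ES p D G) (hK : ES p D K) :
    ES p D (fun z => G z + K z) :=
  ⟨hG.smooth.add hK.smooth, fun z hz => by rw [hG.even z hz, hK.even z hz]⟩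

theorem ES.r2 {G : (Fin (p + 1) → ℝ) × ℝ → V} (hG : ES p D G) :
    ES p D (fun z => z.2 ^ 2 • G z) :=
  ⟨(contDiff_snd.pow 2).contDiffOn.smul hG.smooth,
    fun z hz => by rw [hG.even z hz]; simp [reflD]⟩

variable [CompleteSpace V] 

theorem T1_unique (hD : IsOpen D) (hDr : ∀ z ∈ D, reflD p z ∈ D)
    {G K : (Fin (p + 1) → ℝ) × ℝ → V} (hG : ES p D G) (hK : ContinuousOn K D)
    (h : ∀ z ∈ D, pdSr p G z = z.2 • K z) {z} (hz : z ∈ D) : T1 p G z = K z := by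
  refine cancel_r hD (hG.T1 hD hDr).smooth.continuousOn hK (fun y hy => ?_) hz
  rw [← hG.pdSr_eq hD hDr hy, h y hy]

theorem T1_clm (hD : IsOpen D) (hDr : ∀ z ∈ D, reflD p z ∈ D)
    {G : (Fin (p + 1) → ℝ) × ℝ → V} (hG : ES p D G) (J : V →L[ℝ] V) {z} (hz : z ∈ D) :
    T1 p (fun z => J (G z)) z = J (T1 p G z) := by
  refine T1_unique hD hDr (hG.clm J) ((hG.T1 hD hDr).clm J).smooth.continuousOn (fun y hy => ?_) hz
  rw [← map_smul, ← hG.pdSr_eq hD hDr hy]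
  simp only [pdSr]
  have := (J.hasFDerivAt.comp y (hG.diff hD hy).hasFDerivAt).fderiv
  exact congrArg (fun L => L (0, 1)) this

theorem T1_sum (hD : IsOpen D) (hDr : ∀ z ∈ D, reflD p z ∈ D) {ι : Type*} [Fintype ι]
    {G : ι → (Fin (p + 1) → ℝ) × ℝ → V} (hG : ∀ i, ES p D (G i)) {z} (hz : z ∈ D) :
    T1 p (fun z => ∑ i, G i z) z = ∑ i, T1 p (G i) z := by
  refine T1_unique (K := fun z => ∑ i, T1 p (G i) z) hD hDr (ES.sum hG) (ES.sum fun i => (hG i).T1 hD hDr).smooth.continuousOn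
    (fun y hy => ?_) hz
  rw [Finset.smul_sum]
  simp only [← (hG _).pdSr_eq hD hDr hy]
  simp only [pdSr]
  rw [fderiv_fun_sum fun i _ => (hG i).diff hD hy]
  simp

theorem T1_add (hD : IsOpen D) (hDr : ∀ z ∈ D, reflD p z ∈ D)
    {G K : (Fin (p + 1) → ℝ) × ℝ → V} (hG : ES p D G) (hK : ES p D K) {z} (hz : z ∈ D) :
    T1 p (fun z => G z + K z) z = T1 p G z + T1 p K z := by
  refine T1_unique (K := fun z => T1 p G z + T1 p K z) hD hDr (hG.add hK) ((hG.T1 hD hDr).add (hK.T1 hD hDr)).smooth.continuousOn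
    (fun y hy => ?_) hz
  rw [smul_add, ← hG.pdSr_eq hD hDr hy, ← hK.pdSr_eq hD hDr hy]
  simp only [pdSr]
  rw [fderiv_fun_add (hG.diff hD hy) (hK.diff hD hy)]
  simp

theorem T1_smul (hD : IsOpen D) (hDr : ∀ z ∈ D, reflD p z ∈ D)
    {G : (Fin (p + 1) → ℝ) × ℝ → V} (hG : ES p D G) (c : ℝ) {z} (hz : z ∈ D) :
    T1 p (fun z => c • G z) z = c • T1 p G z := by
  simpa using T1_clm hD hDr hG (c • ContinuousLinearMap.id ℝ V) hz

theorem T1_r2 (hD : IsOpen D) (hDr : ∀ z ∈ D, reflD p z ∈ D)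
    {G : (Fin (p + 1) → ℝ) × ℝ → V} (hG : ES p D G) {z} (hz : z ∈ D) :
    T1 p (fun z => z.2 ^ 2 • G z) z = (2 : ℝ) • G z + z.2 ^ 2 • T1 p G z := by
  refine T1_unique (K := fun z => (2 : ℝ) • G z + z.2 ^ 2 • T1 p G z) hD hDr hG.r2 ((hG.smul 2).add (hG.T1 hD hDr).r2).smooth.continuousOn
    (fun y hy => ?_) hz
  have h1 : HasFDerivAt (fun z : (Fin (p + 1) → ℝ) × ℝ => z.2 ^ 2) _ y :=
    (hasFDerivAt_snd (𝕜 := ℝ) (p := y)).pow 2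
  have h2 := (h1.smul (hG.diff hD hy).hasFDerivAt).fderiv
  have h3 := congrArg (fun L => L (0, 1)) h2
  have h4 := hG.pdSr_eq hD hDr hy
  simp only [pdSr] at h4 ⊢
  refine h3.trans ?_
  simp [h4, smul_smul, smul_add]
  module

theorem T1_pdSx (hD : IsOpen D) (hDr : ∀ z ∈ D, reflD p z ∈ D)
    {G : (Fin (p + 1) → ℝ) × ℝ → V} (hG : ES p D G) (s) {z} (hz : z ∈ D) :
    T1 p (pdSx p s G) z = pdSx p s (T1 p G) z := by
  have hT := hG.T1 hD hDr
  refine T1_unique hD hDr (hG.pdSx hD hDr s) (hT.pdSx hD hDr s).smooth.continuousOn (fun y hy => ?_) hz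
  have h1 : pdSr p (pdSx p s G) y = pdSx p s (pdSr p G) y :=
    fderiv_dir_comm ((hG.cda hD hy).of_le ENat.LEInfty.out) _ _
  rw [h1]
  have h2 : pdSx p s (pdSr p G) y = pdSx p s (fun z => z.2 • T1 p G z) y :=
    pdSx_congr hD (fun w hw => hG.pdSr_eq hD hDr hw) hy s
  rw [h2]
  have h3 := ((hasFDerivAt_snd (𝕜 := ℝ) (p := y)).smul (hT.diff hD hy).hasFDerivAt).fderiv
  have h4 := congrArg (fun L => L (Pi.single s 1, 0)) h3
  refine h4.trans ?_
  simp [pdSx]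

theorem pdSx_clm (hD : IsOpen D) 
    {G : (Fin (p + 1) → ℝ) × ℝ → V} (hG : ES p D G) (J : V →L[ℝ] V) (s) {z} (hz : z ∈ D) :
    pdSx p s (fun z => J (G z)) z = J (pdSx p s G z) := by
  have := (J.hasFDerivAt.comp z (hG.diff hD hz).hasFDerivAt).fderiv
  exact congrArg (fun L => L (Pi.single s 1, 0)) this

theorem pdSx_sum (hD : IsOpen D) {ι : Type*} [Fintype ι]
    {G : ι → (Fin (p + 1) → ℝ) × ℝ → V} (hG : ∀ i, ES p D (G i)) (s) {z} (hz : z ∈ D) :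
    pdSx p s (fun z => ∑ i, G i z) z = ∑ i, pdSx p s (G i) z := by
  simp only [pdSx]
  rw [fderiv_fun_sum fun i _ => (hG i).diff hD hz]
  simp

theorem pdSx_add (hD : IsOpen D)
    {G K : (Fin (p + 1) → ℝ) × ℝ → V} (hG : ES p D G) (hK : ES p D K) (s) {z} (hz : z ∈ D) :
    pdSx p s (fun z => G z + K z) z = pdSx p s G z + pdSx p s K z := by
  simp only [pdSx]
  rw [fderiv_fun_add (hG.diff hD hz) (hK.diff hD hz)]
  simp

theorem pdSx_r2 (hD : IsOpen D)
    {G : (Fin (p + 1) → ℝ) × ℝ → V} (hG : ES p D G) (s) {z} (hz : z ∈ D) :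
    pdSx p s (fun z => z.2 ^ 2 • G z) z = z.2 ^ 2 • pdSx p s G z := by
  have h1 : HasFDerivAt (fun z : (Fin (p + 1) → ℝ) × ℝ => z.2 ^ 2) _ z :=
    (hasFDerivAt_snd (𝕜 := ℝ) (p := z)).pow 2
  have h2 := (h1.smul (hG.diff hD hz).hasFDerivAt).fderiv
  have h3 := congrArg (fun L => L (Pi.single s 1, 0)) h2
  refine h3.trans ?_
  simp [pdSx]

theorem pdSx_comm (hD : IsOpen D)
    {G : (Fin (p + 1) → ℝ) × ℝ → V} (hG : ES p D G) (s t) {z} (hz : z ∈ D) :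
    pdSx p s (pdSx p t G) z = pdSx p t (pdSx p s G) z :=
  fderiv_dir_comm ((hG.cda hD hz).of_le ENat.LEInfty.out) _ _

end T


section T
variable {V : Type*} [NormedAddCommGroup V] [NormedSpace ℝ V] {p : ℕ}
  {D : Set ((Fin (p + 1) → ℝ) × ℝ)} [CompleteSpace V]

open ContDiff

theorem ES.iter (hD : IsOpen D) (hDr : ∀ z ∈ D, reflD p z ∈ D)
    {G : (Fin (p + 1) → ℝ) × ℝ → V} (h : ES p D G) (k : ℕ) : ES p D ((GPSM.T1 p)^[k] G) := by
  induction k with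
  | zero => exact h
  | succ k ih => rw [Function.iterate_succ_apply']; exact ih.T1 hD hDr

theorem CRk_a (hD : IsOpen D) (hDr : ∀ z ∈ D, reflD p z ∈ D) (J : Fin (p + 1) → V →L[ℝ] V)
    {F H : (Fin (p + 1) → ℝ) × ℝ → V} (hF : ES p D F) (hH : ES p D H)
    (a : ∀ z ∈ D, ∑ s, J s (pdSx p s F z) = z.2 ^ 2 • T1 p H z + H z) (k : ℕ) :
    ∀ z ∈ D, ∑ s, J s (pdSx p s ((T1 p)^[k] F) z) =
      z.2 ^ 2 • T1 p ((T1 p)^[k] H) z + (2 * (k : ℝ) + 1) • ((T1 p)^[k] H) z := by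
  induction k with
  | zero => intro z hz; simpa using a z hz
  | succ k ih =>
    intro z hz
    have hFk := hF.iter hD hDr k
    have hHk := hH.iter hD hDr k
    have h1 := T1_congr hD ih hz
    rw [T1_sum hD hDr (fun s => (hFk.pdSx hD hDr s).clm (J s)) hz,
      T1_add hD hDr (hHk.T1 hD hDr).r2 (hHk.smul _) hz, T1_r2 hD hDr (hHk.T1 hD hDr) hz,
      T1_smul hD hDr hHk _ hz] at h1
    simp only [Function.iterate_succ_apply']
    have h2 : ∀ s, T1 p (fun z => J s (pdSx p s ((T1 p)^[k] F) z)) z =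
        J s (pdSx p s (T1 p ((T1 p)^[k] F)) z) := by
      intro s
      rw [T1_clm hD hDr (hFk.pdSx hD hDr s) _ hz, T1_pdSx hD hDr hFk s hz]
    simp only [h2] at h1
    rw [h1]
    push_cast
    module

theorem CRk_b (hD : IsOpen D) (hDr : ∀ z ∈ D, reflD p z ∈ D) (J : Fin (p + 1) → V →L[ℝ] V)
    {F H : (Fin (p + 1) → ℝ) × ℝ → V} (hF : ES p D F) (hH : ES p D H)
    (b : ∀ z ∈ D, ∑ s, J s (pdSx p s H z) = (-1 : ℝ) • T1 p F z) (k : ℕ) :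
    ∀ z ∈ D, ∑ s, J s (pdSx p s ((T1 p)^[k] H) z) = (-1 : ℝ) • T1 p ((T1 p)^[k] F) z := by
  induction k with
  | zero => intro z hz; simpa using b z hz
  | succ k ih =>
    intro z hz
    have hFk := hF.iter hD hDr k
    have hHk := hH.iter hD hDr k
    have h1 := T1_congr hD ih hz
    rw [T1_sum hD hDr (fun s => (hHk.pdSx hD hDr s).clm (J s)) hz,
      T1_smul hD hDr (hFk.T1 hD hDr) _ hz] at h1
    simp only [Function.iterate_succ_apply']
    have h2 : ∀ s, T1 p (fun z => J s (pdSx p s ((T1 p)^[k] H) z)) z =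
        J s (pdSx p s (T1 p ((T1 p)^[k] H)) z) := by
      intro s
      rw [T1_clm hD hDr (hHk.pdSx hD hDr s) _ hz, T1_pdSx hD hDr hHk s hz]
    simp only [h2] at h1
    rw [h1]

/-- composing two first order systems gives the Laplacian -/
theorem lap_of_CR (hD : IsOpen D) (hDr : ∀ z ∈ D, reflD p z ∈ D) {P Q : Fin (p + 1) → V →L[ℝ] V}
    (hPQ : CliffRel P Q) {G K : (Fin (p + 1) → ℝ) × ℝ → V} (hG : ES p D G) 
    (h : ∀ z ∈ D, ∑ s, Q s (pdSx p s G z) = K z) {z} (hz : z ∈ D) :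
    ∑ s, pdSx p s (pdSx p s G) z = ∑ s, P s (pdSx p s K z) := by
  rw [← cliff_sum hPQ (fun s t => pdSx p s (pdSx p t G) z) (fun s t => pdSx_comm hD hG s t hz)]
  refine Finset.sum_congr rfl fun s _ => ?_
  rw [← pdSx_congr hD h hz, pdSx_sum hD (fun t => (hG.pdSx hD hDr t).clm (Q t)) s hz]
  congr 1
  refine Finset.sum_congr rfl fun t _ => ?_
  rw [pdSx_clm hD (hG.pdSx hD hDr t) _ s hz]

theorem lap_Fk (hD : IsOpen D) (hDr : ∀ z ∈ D, reflD p z ∈ D) {J Jb : Fin (p + 1) → V →L[ℝ] V}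
    (hJ : CliffRel Jb J)
    {F H : (Fin (p + 1) → ℝ) × ℝ → V} (hF : ES p D F) (hH : ES p D H)
    (a : ∀ z ∈ D, ∑ s, J s (pdSx p s F z) = z.2 ^ 2 • T1 p H z + H z)
    (b : ∀ z ∈ D, ∑ s, Jb s (pdSx p s H z) = (-1 : ℝ) • T1 p F z) (k : ℕ) {z} (hz : z ∈ D) :
    ∑ s, pdSx p s (pdSx p s ((T1 p)^[k] F)) z =
      -(z.2 ^ 2 • T1 p (T1 p ((T1 p)^[k] F)) z + (2 * (k : ℝ) + 1) • T1 p ((T1 p)^[k] F) z) := by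
  have hHk := hH.iter hD hDr k
  have b1 := CRk_b hD hDr Jb hF hH b k z hz
  have b2 := CRk_b hD hDr Jb hF hH b (k + 1) z hz
  simp only [Function.iterate_succ_apply'] at b2
  rw [lap_of_CR hD hDr hJ (hF.iter hD hDr k) (CRk_a hD hDr J hF hH a k) hz]
  have e : ∀ s, Jb s (pdSx p s (fun z => z.2 ^ 2 • T1 p ((T1 p)^[k] H) z +
      (2 * (k : ℝ) + 1) • ((T1 p)^[k] H) z) z) = z.2 ^ 2 • Jb s (pdSx p s (T1 p ((T1 p)^[k] H)) z) +
      (2 * (k : ℝ) + 1) • Jb s (pdSx p s ((T1 p)^[k] H) z) := by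
    intro s
    rw [pdSx_add hD (hHk.T1 hD hDr).r2 (hHk.smul _) s hz, pdSx_r2 hD (hHk.T1 hD hDr) s hz]
    have := pdSx_clm hD hHk ((2 * (k : ℝ) + 1) • ContinuousLinearMap.id ℝ V) s hz
    simp only [ContinuousLinearMap.smul_apply, ContinuousLinearMap.id_apply] at this
    rw [this]
    simp
  simp only [e]
  rw [Finset.sum_add_distrib, ← Finset.smul_sum, ← Finset.smul_sum, b1, b2]
  module

theorem lap_Hk (hD : IsOpen D) (hDr : ∀ z ∈ D, reflD p z ∈ D) {J Jb : Fin (p + 1) → V →L[ℝ] V}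
    (hJ : CliffRel J Jb)
    {F H : (Fin (p + 1) → ℝ) × ℝ → V} (hF : ES p D F) (hH : ES p D H)
    (a : ∀ z ∈ D, ∑ s, J s (pdSx p s F z) = z.2 ^ 2 • T1 p H z + H z)
    (b : ∀ z ∈ D, ∑ s, Jb s (pdSx p s H z) = (-1 : ℝ) • T1 p F z) (k : ℕ) {z} (hz : z ∈ D) :
    ∑ s, pdSx p s (pdSx p s ((T1 p)^[k] H)) z =
      -(z.2 ^ 2 • T1 p (T1 p ((T1 p)^[k] H)) z + (2 * (k : ℝ) + 3) • T1 p ((T1 p)^[k] H) z) := by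
  have hFk := hF.iter hD hDr k
  have a2 := CRk_a hD hDr J hF hH a (k + 1) z hz
  simp only [Function.iterate_succ_apply'] at a2
  rw [lap_of_CR hD hDr hJ (hH.iter hD hDr k) (CRk_b hD hDr Jb hF hH b k) hz]
  have e : ∀ s, J s (pdSx p s (fun z => (-1 : ℝ) • T1 p ((T1 p)^[k] F) z) z) =
      (-1 : ℝ) • J s (pdSx p s (T1 p ((T1 p)^[k] F)) z) := by
    intro s
    have := pdSx_clm hD (hFk.T1 hD hDr) ((-1 : ℝ) • ContinuousLinearMap.id ℝ V) s hz
    simp only [ContinuousLinearMap.smul_apply, ContinuousLinearMap.id_apply] at this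
    rw [this]
    simp
  simp only [e]
  rw [← Finset.smul_sum, a2]
  push_cast
  module

/-- `T2` of `r • K` is `r • T1 K` -/
theorem T2_eq (hD : IsOpen D) (hDr : ∀ z ∈ D, reflD p z ∈ D)
    {O K : (Fin (p + 1) → ℝ) × ℝ → V} (hK : ES p D K) (h : ∀ z ∈ D, O z = z.2 • K z)
    {z} (hz : z ∈ D) : T2 p O z = z.2 • T1 p K z := by
  unfold T2
  have hr : ∀ y ∈ D, pdSr p O y = K y + y.2 ^ 2 • T1 p K y := by
    intro y hy
    rw [pdSr_congr hD h hy]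
    have h3 := ((hasFDerivAt_snd (𝕜 := ℝ) (p := y)).smul (hK.diff hD hy).hasFDerivAt).fderiv
    have h4 := congrArg (fun L => L (0, 1)) h3
    refine h4.trans ?_
    have := hK.pdSr_eq hD hDr hy
    simp only [pdSr] at this
    simp [this, smul_smul, pow_two, add_comm]
  split_ifs with h0
  · have hE : ES p D (fun y => K y + y.2 ^ 2 • T1 p K y) := hK.add (hK.T1 hD hDr).r2
    rw [pdSr2, pdSr_congr hD hr hz, hE.pdSr_eq hD hDr hz, h0]
    simp
  · rw [← hK.pdSr_eq hD hDr hz]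
    have h1 : HasFDerivAt (fun t : ℝ => K (z.1, t))
        ((fderiv ℝ K z).comp (ContinuousLinearMap.inr ℝ (Fin (p + 1) → ℝ) ℝ)) z.2 := by
      have h5 : HasFDerivAt (fun t : ℝ => (z.1, t)) (ContinuousLinearMap.inr ℝ (Fin (p + 1) → ℝ) ℝ) z.2 :=
        hasFDerivAt_prodMk_right z.1 z.2
      exact HasFDerivAt.comp z.2 (g := K) (f := fun t : ℝ => (z.1, t)) (hK.diff hD hz).hasFDerivAt h5
    have h2 : (fun t : ℝ => t⁻¹ • O (z.1, t)) =ᶠ[𝓝 z.2] fun t => K (z.1, t) := by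
      have hc : Continuous (fun t : ℝ => ((z.1, t) : (Fin (p + 1) → ℝ) × ℝ)) := by fun_prop
      filter_upwards [hc.continuousAt.preimage_mem_nhds (hD.mem_nhds (x := (z.1, z.2)) hz),
        isOpen_ne.mem_nhds h0] with t ht ht0
      rw [h _ ht, smul_smul, inv_mul_cancel₀ ht0, one_smul]
    rw [h2.fderiv_eq, h1.fderiv]
    simp [pdSr]

theorem T2_iter (hD : IsOpen D) (hDr : ∀ z ∈ D, reflD p z ∈ D)
    {O K : (Fin (p + 1) → ℝ) × ℝ → V} (hK : ES p D K) (h : ∀ z ∈ D, O z = z.2 • K z) (k : ℕ) :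
    ∀ z ∈ D, (T2 p)^[k] O z = z.2 • (T1 p)^[k] K z := by
  induction k with
  | zero => exact h
  | succ k ih =>
    intro z hz
    rw [Function.iterate_succ_apply', Function.iterate_succ_apply']
    exact T2_eq hD hDr (hK.iter hD hDr k) ih hz

/-- regularity of stem functions and the system for `F₁`, `H = F₂ / r` -/
theorem stem_system (hD : IsOpen D) (hDr : ∀ z ∈ D, reflD p z ∈ D) {J Jb : Fin (p + 1) → V →L[ℝ] V}
    (hJ : CliffRel J Jb) (hJb : CliffRel Jb J)
    {F₁ F₂ : (Fin (p + 1) → ℝ) × ℝ → V} (h1 : ContDiffOn ℝ 1 F₁ D) (h2 : ContDiffOn ℝ 1 F₂ D)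
    (hst : IsStem p D F₁ F₂)
    (c1 : ∀ z ∈ D, ∑ s, J s (pdSx p s F₁ z) = pdSr p F₂ z)
    (c2 : ∀ z ∈ D, ∑ s, Jb s (pdSx p s F₂ z) = - pdSr p F₁ z) :
    ∃ H, ES p D F₁ ∧ ES p D H ∧ (∀ z ∈ D, F₂ z = z.2 • H z) ∧
      (∀ z ∈ D, ∑ s, J s (pdSx p s F₁ z) = z.2 ^ 2 • T1 p H z + H z) ∧
      (∀ z ∈ D, ∑ s, Jb s (pdSx p s H z) = (-1 : ℝ) • T1 p F₁ z) := by
  have hF₁ : ES p D F₁ := ⟨weyl_CR hD hJb h1 h2 (ε := 1) (by norm_num)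
    (fun z hz => by rw [c1 z hz, one_smul]) (fun z hz => by rw [c2 z hz]; simp), fun z hz => (hst z hz).1⟩
  have hF₂ : OS p D F₂ := ⟨weyl_CR hD hJ h2 h1 (ε := -1) (by norm_num)
    (fun z hz => by rw [c2 z hz]; simp) (fun z hz => by rw [c1 z hz]; simp), fun z hz => (hst z hz).2⟩
  have hH := hF₂.Qd hD hDr
  have hF₂H : ∀ z ∈ D, F₂ z = z.2 • Qd p F₂ z := fun z hz => hF₂.eq_smul hz
  refine ⟨Qd p F₂, hF₁, hH, hF₂H, ?_, ?_⟩
  · intro z hz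
    rw [c1 z hz, pdSr_congr hD hF₂H hz]
    have h3 := ((hasFDerivAt_snd (𝕜 := ℝ) (p := z)).smul (hH.diff hD hz).hasFDerivAt).fderiv
    have h4 := congrArg (fun L => L (0, 1)) h3
    refine h4.trans ?_
    have := hH.pdSr_eq hD hDr hz
    simp only [pdSr] at this
    simp [this, smul_smul, pow_two]
  · intro z hz
    refine cancel_r (K₁ := fun z => ∑ s, Jb s (pdSx p s (Qd p F₂) z)) (K₂ := fun z => (-1 : ℝ) • T1 p F₁ z) hD
      (ES.sum fun s => (hH.pdSx hD hDr s).clm (Jb s)).smooth.continuousOn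
      ((hF₁.T1 hD hDr).smul (-1)).smooth.continuousOn ?_ hz
    intro y hy
    rw [smul_comm, ← hF₁.pdSr_eq hD hDr hy, neg_one_smul, ← c2 y hy, Finset.smul_sum]
    refine Finset.sum_congr rfl fun s _ => ?_
    rw [pdSx_congr hD hF₂H hy, ← map_smul]
    congr 1
    have h3 := ((hasFDerivAt_snd (𝕜 := ℝ) (p := y)).smul (hH.diff hD hy).hasFDerivAt).fderiv
    have h4 := congrArg (fun L => L (Pi.single s 1, 0)) h3
    refine (h4.trans ?_).symm
    simp [pdSx]

end T


section T
variable {V : Type*} [NormedAddCommGroup V] [NormedSpace ℝ V] {m p : ℕ}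
  {D : Set ((Fin (p + 1) → ℝ) × ℝ)}

open ContDiff

/-- `projP` as a continuous linear map -/
noncomputable def projL (m p : ℕ) : (Fin (m + 1) → ℝ) →L[ℝ] (Fin (p + 1) → ℝ) :=
  ContinuousLinearMap.pi fun s =>
    if h : (s : ℕ) < m + 1 then ContinuousLinearMap.proj (⟨(s : ℕ), h⟩ : Fin (m + 1)) else 0

theorem projL_apply (x : Fin (m + 1) → ℝ) : projL m p x = projP m p x := by
  ext s
  simp only [projL, projP, ContinuousLinearMap.coe_pi']
  split_ifs <;> simp

/-- a coordinate of `x_q` as a continuous linear map -/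
noncomputable def xqL (m p : ℕ) (t : Fin (m + 1)) : (Fin (m + 1) → ℝ) →L[ℝ] ℝ :=
  if (t : ℕ) ≤ p then 0 else ContinuousLinearMap.proj t

theorem xqL_apply (t : Fin (m + 1)) (x : Fin (m + 1) → ℝ) : xqL m p t x = xqpart m p x t := by
  simp only [xqL, xqpart]
  split_ifs <;> simp

/-- the functional `w ↦ ⟨x_q, w⟩` -/
noncomputable def bq (m p : ℕ) (x : Fin (m + 1) → ℝ) : (Fin (m + 1) → ℝ) →L[ℝ] ℝ :=
  ∑ s, xqpart m p x s • xqL m p s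

/-- the lift of a function on `ℝ^{p+2}` -/
noncomputable def Lf (m p : ℕ) (G : (Fin (p + 1) → ℝ) × ℝ → V) (x : Fin (m + 1) → ℝ) : V :=
  G (projP m p x, rad m p x)

/-- the set of `x` with `(x_p, r) ∈ D` -/
def Om (m p : ℕ) (D : Set ((Fin (p + 1) → ℝ) × ℝ)) : Set (Fin (m + 1) → ℝ) :=
  {x | (projP m p x, rad m p x) ∈ D}

theorem continuous_xqpart (s : Fin (m + 1)) : Continuous fun x => xqpart m p x s := by
  simp only [← xqL_apply]
  exact (xqL m p s).continuous

theorem continuous_rad : Continuous (rad m p) := by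
  unfold rad
  exact (continuous_finsetSum _ fun s _ => (continuous_xqpart s).pow 2).sqrt

theorem isOpen_Om (hD : IsOpen D) : IsOpen (Om m p D) := by
  have h : Continuous (fun x : Fin (m + 1) → ℝ => (projP m p x, rad m p x)) := by
    simp only [← projL_apply]
    exact (projL m p).continuous.prodMk continuous_rad
  exact hD.preimage h

theorem rad_sq (x : Fin (m + 1) → ℝ) : rad m p x ^ 2 = ∑ s, xqpart m p x s ^ 2 :=
  Real.sq_sqrt (Finset.sum_nonneg fun _ _ => sq_nonneg _)

theorem xqpart_of_rad {x : Fin (m + 1) → ℝ} (h : rad m p x = 0) (s) : xqpart m p x s = 0 := by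
  have h1 := rad_sq (p := p) x
  rw [h, zero_pow two_ne_zero] at h1
  have := (Finset.sum_eq_zero_iff_of_nonneg fun s _ => sq_nonneg (xqpart m p x s)).1 h1.symm s (Finset.mem_univ s)
  exact pow_eq_zero_iff two_ne_zero |>.1 this

theorem rad_le {x y : Fin (m + 1) → ℝ} (h : rad m p y = 0) :
    rad m p x ≤ Real.sqrt (m + 1) * ‖x - y‖ := by
  have h0 := xqpart_of_rad h
  rw [rad, ← Real.sqrt_sq (norm_nonneg (x - y)), ← Real.sqrt_mul (by positivity)]
  apply Real.sqrt_le_sqrt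
  calc ∑ s, xqpart m p x s ^ 2 ≤ ∑ s : Fin (m + 1), ‖x - y‖ ^ 2 := by
        refine Finset.sum_le_sum fun s _ => ?_
        have h1 : |xqpart m p x s| ≤ ‖x - y‖ := by
          have := h0 s
          unfold xqpart at this ⊢
          split_ifs with hs
          · simp
          · rw [if_neg hs] at this
            have h3 := norm_le_pi_norm (x - y) s
            simpa [this] using h3
        rw [← sq_abs]
        exact pow_le_pow_left₀ (abs_nonneg _) h1 2
    _ = (m + 1) * ‖x - y‖ ^ 2 := by simp

theorem hasFDerivAt_lift (hD : IsOpen D) (hDr : ∀ z ∈ D, reflD p z ∈ D)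
    {G : (Fin (p + 1) → ℝ) × ℝ → V} (hG : ES p D G) {x : Fin (m + 1) → ℝ} (hx : x ∈ Om m p D) :
    HasFDerivAt (Lf m p G)
      ((fderiv ℝ G (projP m p x, rad m p x)).comp ((projL m p).prod 0) +
        (bq m p x).smulRight (Lf m p (T1 p G) x)) x := by
  have hz : (projP m p x, rad m p x) ∈ D := hx
  have hGd := (hG.diff hD hz).hasFDerivAt
  by_cases h0 : rad m p x = 0
  · have hbq : bq m p x = 0 := by simp [bq, xqpart_of_rad h0]
    rw [hbq]
    have e0 : ContinuousLinearMap.smulRight (0 : (Fin (m + 1) → ℝ) →L[ℝ] ℝ) (Lf m p (T1 p G) x) = 0 := by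
      ext; simp
    rw [e0, add_zero, hasFDerivAt_iff_isLittleO]
    have hc : Continuous (fun x : Fin (m + 1) → ℝ => (projP m p x, rad m p x)) := by
      simp only [← projL_apply]
      exact (projL m p).continuous.prodMk continuous_rad
    have h1 := (hasFDerivAt_iff_isLittleO.1 hGd).comp_tendsto (hc.tendsto x)
    have h2 : (fun y : Fin (m + 1) → ℝ => ((projP m p y, rad m p y) : (Fin (p + 1) → ℝ) × ℝ) - (projP m p x, rad m p x))
        =O[𝓝 x] fun y => y - x := by
      simp only [Prod.mk_sub_mk]
      refine Asymptotics.IsBigO.prod_left ?_ ?_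
      · simp only [← projL_apply, ← map_sub]
        exact (projL m p).isBigO_comp _ _
      · refine Asymptotics.IsBigO.of_bound (Real.sqrt (m + 1)) (Eventually.of_forall fun y => ?_)
        rw [h0, sub_zero, Real.norm_of_nonneg (show 0 ≤ rad m p y from Real.sqrt_nonneg _)]
        exact rad_le h0
    have h3 := h1.trans_isBigO h2
    refine h3.congr_left fun y => ?_
    have hr : pdSr p G (projP m p x, rad m p x) = 0 := by
      rw [hG.pdSr_eq hD hDr hz]; simp [h0]
    have e1 : ((projP m p y, rad m p y) : (Fin (p + 1) → ℝ) × ℝ) - (projP m p x, rad m p x) =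
        (projL m p (y - x), 0) + (rad m p y) • (0, 1) := by
      rw [map_sub, projL_apply, projL_apply]
      ext <;> simp [h0]
    have e2 : fderiv ℝ G (projP m p x, rad m p x) (((projP m p y, rad m p y) : (Fin (p + 1) → ℝ) × ℝ) - (projP m p x, rad m p x)) =
        fderiv ℝ G (projP m p x, rad m p x) (projL m p (y - x), 0) := by
      rw [e1, map_add, map_smul]
      unfold pdSr at hr
      rw [hr]; simp
    simp only [Function.comp, Lf]
    rw [e2]
    simp
  · have hs : ∀ s ∈ Finset.univ, HasFDerivAt (fun x => xqpart m p x s ^ 2) ((2 * xqpart m p x s) • xqL m p s) x := by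
      intro s _
      simp only [← xqL_apply]
      have := (xqL m p s).hasFDerivAt (x := x) |>.pow 2
      simpa using this
    have hsum := HasFDerivAt.fun_sum hs
    have hne : ∑ s, xqpart m p x s ^ 2 ≠ 0 := by
      rw [← rad_sq]; exact pow_ne_zero 2 h0
    have hrad : HasFDerivAt (rad m p) ((rad m p x)⁻¹ • bq m p x) x := by
      have := hsum.sqrt hne
      refine HasFDerivAt.congr_fderiv (f := rad m p) this ?_
      unfold bq
      rw [Finset.smul_sum, Finset.smul_sum]
      refine Finset.sum_congr rfl fun s _ => ?_
      rw [smul_smul, smul_smul]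
      congr 1
      change 1 / (2 * rad m p x) * _ = _
      field_simp
    have hp : HasFDerivAt (projP m p) (projL m p) x := by
      have : projP m p = projL m p := by ext1 y; rw [projL_apply]
      rw [this]; exact (projL m p).hasFDerivAt
    have h1 := HasFDerivAt.comp x (g := G) (f := fun y => (projP m p y, rad m p y)) hGd (hp.prodMk hrad)
    refine h1.congr_fderiv ?_
    ext1 w
    have e1 : ((projL m p w, (rad m p x)⁻¹ * bq m p x w) : (Fin (p + 1) → ℝ) × ℝ) =
        (projL m p w, 0) + ((rad m p x)⁻¹ * bq m p x w) • (0, 1) := by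
      ext <;> simp
    have e2 : Lf m p (T1 p G) x = (rad m p x)⁻¹ • fderiv ℝ G (projP m p x, rad m p x) (0, 1) := by
      simp only [Lf, T1]
      rw [if_neg h0]; rfl
    simp only [ContinuousLinearMap.comp_apply, ContinuousLinearMap.prod_apply, add_apply,
      ContinuousLinearMap.smulRight_apply, smul_apply, smul_eq_mul, zero_apply]
    rw [e1, map_add, map_smul, e2, smul_smul, mul_comm]

theorem fderiv_lift [CompleteSpace V] (hD : IsOpen D) (hDr : ∀ z ∈ D, reflD p z ∈ D)
    {G : (Fin (p + 1) → ℝ) × ℝ → V} (hG : ES p D G) {x : Fin (m + 1) → ℝ} (hx : x ∈ Om m p D) :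
    fderiv ℝ (Lf m p G) x = ∑ s : Fin (p + 1), ((ContinuousLinearMap.proj s).comp (projL m p)).smulRight
      (Lf m p (pdSx p s G) x) + (bq m p x).smulRight (Lf m p (T1 p G) x) := by
  rw [(hasFDerivAt_lift hD hDr hG hx).fderiv]
  congr 1
  ext1 w
  have e : ((projL m p w, 0) : (Fin (p + 1) → ℝ) × ℝ) =
      ∑ s, (projL m p w s) • ((Pi.single s 1, 0) : (Fin (p + 1) → ℝ) × ℝ) := by
    refine Prod.ext ?_ ?_
    · rw [Prod.fst_sum]
      simp only [Prod.smul_mk]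
      exact pi_eq_sum_univ' _
    · rw [Prod.snd_sum]; simp
  simp only [ContinuousLinearMap.comp_apply, ContinuousLinearMap.prod_apply, zero_apply]
  rw [e, map_sum]
  simp only [map_smul, sum_apply, Lf, pdSx, ContinuousLinearMap.smulRight_apply,
    ContinuousLinearMap.comp_apply, ContinuousLinearMap.proj_apply]

theorem contDiff_bq : ContDiff ℝ ∞ (bq m p) := by
  unfold bq
  refine ContDiff.sum fun s _ => ?_
  simp only [← xqL_apply]
  exact (xqL m p s).contDiff.smul contDiff_const

theorem smooth_lift [CompleteSpace V] (hD : IsOpen D) (hDr : ∀ z ∈ D, reflD p z ∈ D)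
    {G : (Fin (p + 1) → ℝ) × ℝ → V} (hG : ES p D G) : ContDiffOn ℝ ∞ (Lf m p G) (Om m p D) := by
  rw [contDiffOn_infty]
  intro n
  induction n generalizing G with
  | zero =>
    rw [Nat.cast_zero, contDiffOn_zero]
    exact fun x hx => (hasFDerivAt_lift hD hDr hG hx).continuousAt.continuousWithinAt
  | succ n ih =>
    rw [Nat.cast_add, Nat.cast_one, contDiffOn_succ_iff_fderiv_of_isOpen (isOpen_Om hD)]
    refine ⟨fun x hx => (hasFDerivAt_lift hD hDr hG hx).differentiableAt.differentiableWithinAt, by simp, ?_⟩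
    refine ContDiffOn.congr ?_ (fun x hx => fderiv_lift hD hDr hG hx)
    refine ContDiffOn.add (ContDiffOn.sum fun s _ => ?_) ?_
    · exact contDiffOn_const.smulRight (ih (hG.pdSx hD hDr s))
    · exact (contDiff_bq.of_le (mod_cast le_top)).contDiffOn.smulRight (ih (hG.T1 hD hDr))

theorem projL_single_lt (hp : p < m) (s : Fin (p + 1)) :
    projL m p (Pi.single (Fin.castLE (by omega) s) 1) = Pi.single s 1 := by
  rw [projL_apply]
  ext t
  have ht : (t : ℕ) < m + 1 := by omega
  simp only [projP, dif_pos ht, Pi.single_apply]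
  simp [Fin.ext_iff]

theorem projL_single_gt {s : Fin (m + 1)} (hs : ¬ (s : ℕ) ≤ p) :
    projL m p (Pi.single s 1) = 0 := by
  rw [projL_apply]
  ext t
  simp only [projP, Pi.single_apply]
  simp [Fin.ext_iff]
  omega

theorem xqpart_single (s t : Fin (m + 1)) : xqpart m p (Pi.single s 1) t =
    if s = t ∧ ¬ (s : ℕ) ≤ p then 1 else 0 := by
  simp only [xqpart, Pi.single_apply]
  by_cases h : s = t
  · subst h; by_cases h2 : (s : ℕ) ≤ p <;> simp [h2]
  · simp [h, Ne.symm h]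

theorem bq_single (x) (s : Fin (m + 1)) : bq m p x (Pi.single s 1) = xqpart m p x s := by
  simp only [bq, sum_apply, smul_apply, xqL_apply, xqpart_single, smul_eq_mul]
  by_cases h2 : (s : ℕ) ≤ p
  · simp [h2]; simp [xqpart, h2]
  · simp [h2]

theorem pdF_lift_lt (hD : IsOpen D) (hDr : ∀ z ∈ D, reflD p z ∈ D) (hp : p < m)
    {G : (Fin (p + 1) → ℝ) × ℝ → V} (hG : ES p D G) {x : Fin (m + 1) → ℝ} (hx : x ∈ Om m p D)
    (s : Fin (p + 1)) :
    pdF m (Fin.castLE (by omega) s) (Lf m p G) x = Lf m p (pdSx p s G) x := by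
  rw [pdF, (hasFDerivAt_lift hD hDr hG hx).fderiv]
  have h2 : ((Fin.castLE (by omega) s : Fin (m + 1)) : ℕ) ≤ p := by simp; omega
  have h1 : bq m p x (Pi.single (Fin.castLE (by omega) s) 1) = 0 := by
    rw [bq_single, xqpart, if_pos h2]
  simp only [ContinuousLinearMap.comp_apply, ContinuousLinearMap.prod_apply, zero_apply, add_apply,
    ContinuousLinearMap.smulRight_apply]
  rw [h1, projL_single_lt hp]
  simp [Lf, pdSx]

theorem pdF_lift_gt (hD : IsOpen D) (hDr : ∀ z ∈ D, reflD p z ∈ D)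
    {G : (Fin (p + 1) → ℝ) × ℝ → V} (hG : ES p D G) {x : Fin (m + 1) → ℝ} (hx : x ∈ Om m p D)
    {s : Fin (m + 1)} (hs : ¬ (s : ℕ) ≤ p) :
    pdF m s (Lf m p G) x = xqpart m p x s • Lf m p (T1 p G) x := by
  rw [pdF, (hasFDerivAt_lift hD hDr hG hx).fderiv]
  simp only [ContinuousLinearMap.comp_apply, ContinuousLinearMap.prod_apply, zero_apply, add_apply,
    ContinuousLinearMap.smulRight_apply]
  rw [bq_single, projL_single_gt hs]
  have : ((0, 0) : (Fin (p + 1) → ℝ) × ℝ) = 0 := rfl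
  simp [this]

end T


section T
variable {V : Type*} [NormedAddCommGroup V] [NormedSpace ℝ V] {m p : ℕ}
  {Ω : Set (Fin (m + 1) → ℝ)}

open ContDiff

theorem cdo_diff (hΩ : IsOpen Ω) {g : (Fin (m + 1) → ℝ) → V} (hg : ContDiffOn ℝ ∞ g Ω) {x} (hx : x ∈ Ω) :
    DifferentiableAt ℝ g x := (hg.contDiffAt (hΩ.mem_nhds hx)).differentiableAt (by simp)

theorem pdF_smooth (hΩ : IsOpen Ω) {g : (Fin (m + 1) → ℝ) → V} (hg : ContDiffOn ℝ ∞ g Ω) (s) :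
    ContDiffOn ℝ ∞ (pdF m s g) Ω :=
  (hg.fderiv_of_isOpen hΩ (m := ∞) (by simp)).clm_apply contDiffOn_const

theorem pdF_congr (hΩ : IsOpen Ω) {g h : (Fin (m + 1) → ℝ) → V} (e : ∀ x ∈ Ω, g x = h x) (s) {x} (hx : x ∈ Ω) :
    pdF m s g x = pdF m s h x := by
  have : g =ᶠ[𝓝 x] h := by
    filter_upwards [hΩ.mem_nhds hx] with y hy using e y hy
  rw [pdF, pdF, this.fderiv_eq]

theorem lapF_congr (hΩ : IsOpen Ω) {g h : (Fin (m + 1) → ℝ) → V} (e : ∀ x ∈ Ω, g x = h x) {x} (hx : x ∈ Ω) :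
    lapF m g x = lapF m h x :=
  Finset.sum_congr rfl fun s _ => pdF_congr hΩ (fun _ hy => pdF_congr hΩ e s hy) s hx

theorem pdF_add (hΩ : IsOpen Ω) {g h : (Fin (m + 1) → ℝ) → V} (hg : ContDiffOn ℝ ∞ g Ω)
    (hh : ContDiffOn ℝ ∞ h Ω) (s) {x} (hx : x ∈ Ω) :
    pdF m s (fun x => g x + h x) x = pdF m s g x + pdF m s h x := by
  simp only [pdF]
  rw [fderiv_fun_add (cdo_diff hΩ hg hx) (cdo_diff hΩ hh hx)]
  rfl

theorem pdF_sum (hΩ : IsOpen Ω) {ι : Type*} [Fintype ι] {g : ι → (Fin (m + 1) → ℝ) → V}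
    (hg : ∀ i, ContDiffOn ℝ ∞ (g i) Ω) (s) {x} (hx : x ∈ Ω) :
    pdF m s (fun x => ∑ i, g i x) x = ∑ i, pdF m s (g i) x := by
  simp only [pdF]
  rw [fderiv_fun_sum fun i _ => cdo_diff hΩ (hg i) hx]
  simp

theorem pdF_clm (hΩ : IsOpen Ω) {g : (Fin (m + 1) → ℝ) → V} (hg : ContDiffOn ℝ ∞ g Ω)
    (J : V →L[ℝ] V) (s) {x} (hx : x ∈ Ω) :
    pdF m s (fun x => J (g x)) x = J (pdF m s g x) := by
  have := (J.hasFDerivAt.comp x (cdo_diff hΩ hg hx).hasFDerivAt).fderiv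
  exact congrArg (fun L => L (Pi.single s 1)) this

theorem pdF_xq (hΩ : IsOpen Ω) {g : (Fin (m + 1) → ℝ) → V} (hg : ContDiffOn ℝ ∞ g Ω)
    (s t) {x} (hx : x ∈ Ω) :
    pdF m s (fun x => xqpart m p x t • g x) x =
      xqpart m p x t • pdF m s g x + (if s = t ∧ ¬ (s : ℕ) ≤ p then (1 : ℝ) else 0) • g x := by
  simp only [← xqL_apply]
  have := ((xqL m p t).hasFDerivAt (x := x) |>.smul (cdo_diff hΩ hg hx).hasFDerivAt).fderiv
  have h2 := congrArg (fun L => L (Pi.single s 1)) this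
  refine h2.trans ?_
  rw [← xqpart_single, ← xqL_apply]
  simp [pdF]

theorem xq_smooth {g : (Fin (m + 1) → ℝ) → V} (hg : ContDiffOn ℝ ∞ g Ω) (t) :
    ContDiffOn ℝ ∞ (fun x => xqpart m p x t • g x) Ω := by
  simp only [← xqL_apply]
  exact (xqL m p t).contDiff.contDiffOn.smul hg

theorem lapF_add (hΩ : IsOpen Ω) {g h : (Fin (m + 1) → ℝ) → V} (hg : ContDiffOn ℝ ∞ g Ω)
    (hh : ContDiffOn ℝ ∞ h Ω) {x} (hx : x ∈ Ω) :
    lapF m (fun x => g x + h x) x = lapF m g x + lapF m h x := by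
  simp only [lapF]
  rw [← Finset.sum_add_distrib]
  refine Finset.sum_congr rfl fun s _ => ?_
  rw [← pdF_add hΩ (pdF_smooth hΩ hg s) (pdF_smooth hΩ hh s) s hx]
  exact pdF_congr hΩ (fun y hy => pdF_add hΩ hg hh s hy) s hx

theorem lapF_sum (hΩ : IsOpen Ω) {ι : Type*} [Fintype ι] {g : ι → (Fin (m + 1) → ℝ) → V}
    (hg : ∀ i, ContDiffOn ℝ ∞ (g i) Ω) {x} (hx : x ∈ Ω) :
    lapF m (fun x => ∑ i, g i x) x = ∑ i, lapF m (g i) x := by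
  simp only [lapF]
  rw [Finset.sum_comm]
  refine Finset.sum_congr rfl fun s _ => ?_
  rw [← pdF_sum hΩ (fun i => pdF_smooth hΩ (hg i) s) s hx]
  exact pdF_congr hΩ (fun y hy => pdF_sum hΩ hg s hy) s hx

theorem lapF_clm (hΩ : IsOpen Ω) {g : (Fin (m + 1) → ℝ) → V} (hg : ContDiffOn ℝ ∞ g Ω)
    (J : V →L[ℝ] V) {x} (hx : x ∈ Ω) :
    lapF m (fun x => J (g x)) x = J (lapF m g x) := by
  simp only [lapF]
  rw [map_sum]
  refine Finset.sum_congr rfl fun s _ => ?_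
  rw [← pdF_clm hΩ (pdF_smooth hΩ hg s) J s hx]
  exact pdF_congr hΩ (fun y hy => pdF_clm hΩ hg J s hy) s hx

theorem lapF_xq (hΩ : IsOpen Ω) {g : (Fin (m + 1) → ℝ) → V} (hg : ContDiffOn ℝ ∞ g Ω)
    (t) {x} (hx : x ∈ Ω) :
    lapF m (fun x => xqpart m p x t • g x) x =
      xqpart m p x t • lapF m g x + (2 * if (t : ℕ) ≤ p then (0 : ℝ) else 1) • pdF m t g x := by
  simp only [lapF]
  have h : ∀ s, pdF m s (pdF m s (fun x => xqpart m p x t • g x)) x =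
      xqpart m p x t • pdF m s (pdF m s g) x +
        (2 * (if s = t ∧ ¬ (s : ℕ) ≤ p then (1 : ℝ) else 0)) • pdF m s g x := by
    intro s
    rw [pdF_congr hΩ (fun y hy => pdF_xq hΩ hg s t hy) s hx,
      pdF_add hΩ (xq_smooth (pdF_smooth hΩ hg s) t) (hg.const_smul _) s hx,
      pdF_xq hΩ (pdF_smooth hΩ hg s) s t hx]
    have := pdF_clm hΩ hg ((if s = t ∧ ¬ (s : ℕ) ≤ p then (1 : ℝ) else 0) • ContinuousLinearMap.id ℝ V) s hx
    simp only [smul_apply, ContinuousLinearMap.id_apply] at this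
    rw [this]
    module
  simp only [h]
  rw [Finset.sum_add_distrib, ← Finset.smul_sum]
  congr 1
  rw [Finset.sum_eq_single t]
  · by_cases h : (t : ℕ) ≤ p <;> simp [h]
  · intro s _ hs; simp [hs]
  · simp

theorem sum_split (hp : p < m) (g : Fin (m + 1) → V) :
    ∑ s, g s = ∑ s : Fin (p + 1), g (Fin.castLE (by omega) s) +
      ∑ s : Fin (m + 1), if (s : ℕ) ≤ p then 0 else g s := by
  have h1 : ∑ s, g s = ∑ s : Fin (m + 1), (if (s : ℕ) ≤ p then g s else 0) +
      ∑ s : Fin (m + 1), if (s : ℕ) ≤ p then 0 else g s := by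
    rw [← Finset.sum_add_distrib]
    refine Finset.sum_congr rfl fun s _ => ?_
    split_ifs <;> simp
  rw [h1]
  congr 1
  rw [← Finset.sum_filter]
  symm
  refine Finset.sum_bij (fun s _ => Fin.castLE (by omega) s) ?_ ?_ ?_ ?_
  · intro s _; simp; omega
  · intro a _ b _ h; simpa using h
  · intro s hs
    simp at hs
    exact ⟨⟨s, by omega⟩, by simp, by simp [Fin.ext_iff]⟩
  · intros; rfl

theorem card_gt (hp : p < m) :
    ∑ s : Fin (m + 1), (if (s : ℕ) ≤ p then (0 : ℝ) else 1) = ((m - p : ℕ) : ℝ) := by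
  have h := sum_split (V := ℝ) hp (fun _ => 1)
  simp only [Finset.sum_const, Finset.card_univ, Fintype.card_fin] at h
  rw [Nat.cast_sub hp.le]
  simp at h
  linarith

variable {D : Set ((Fin (p + 1) → ℝ) × ℝ)} [CompleteSpace V]

theorem lapF_lift (hD : IsOpen D) (hDr : ∀ z ∈ D, reflD p z ∈ D) (hp : p < m)
    {G : (Fin (p + 1) → ℝ) × ℝ → V} (hG : ES p D G) {x : Fin (m + 1) → ℝ} (hx : x ∈ Om m p D) :
    lapF m (Lf m p G) x = ∑ s, Lf m p (pdSx p s (pdSx p s G)) x +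
      ((m - p : ℕ) : ℝ) • Lf m p (T1 p G) x + rad m p x ^ 2 • Lf m p (T1 p (T1 p G)) x := by
  have hΩ := isOpen_Om (m := m) hD
  rw [lapF, sum_split hp, add_assoc]
  congr 1
  · refine Finset.sum_congr rfl fun s _ => ?_
    rw [pdF_congr hΩ (fun y hy => pdF_lift_lt hD hDr hp hG hy s) _ hx,
      pdF_lift_lt hD hDr hp (hG.pdSx hD hDr s) hx]
  · rw [← card_gt hp, rad_sq, Finset.sum_smul, Finset.sum_smul, ← Finset.sum_add_distrib]
    refine Finset.sum_congr rfl fun s _ => ?_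
    split_ifs with hs
    · simp [xqpart, hs]
    · rw [pdF_congr hΩ (fun y hy => pdF_lift_gt hD hDr hG hy hs) _ hx,
        pdF_xq hΩ (smooth_lift hD hDr (hG.T1 hD hDr)) s s hx,
        pdF_lift_gt hD hDr (hG.T1 hD hDr) hx hs, smul_smul, pow_two]
      simp [hs, add_comm]

theorem lapF_xq_lift (hD : IsOpen D) (hDr : ∀ z ∈ D, reflD p z ∈ D) (hp : p < m)
    {G : (Fin (p + 1) → ℝ) × ℝ → V} (hG : ES p D G) {x : Fin (m + 1) → ℝ} (hx : x ∈ Om m p D) (t) :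
    lapF m (fun x => xqpart m p x t • Lf m p G x) x =
      xqpart m p x t • (∑ s, Lf m p (pdSx p s (pdSx p s G)) x +
      (((m - p : ℕ) : ℝ) + 2) • Lf m p (T1 p G) x + rad m p x ^ 2 • Lf m p (T1 p (T1 p G)) x) := by
  have hΩ := isOpen_Om (m := m) hD
  rw [lapF_xq hΩ (smooth_lift hD hDr hG) t hx, lapF_lift hD hDr hp hG hx]
  split_ifs with ht
  · simp [xqpart, ht]
  · rw [pdF_lift_gt hD hDr hG hx ht]
    module

/-- the functions `A_k + ω B_k` -/
noncomputable def fk (m p : ℕ) (J : ℕ → V →L[ℝ] V) (F H : (Fin (p + 1) → ℝ) × ℝ → V)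
    (x : Fin (m + 1) → ℝ) : V :=
  Lf m p F x + ∑ t : Fin (m + 1), J t (xqpart m p x t • Lf m p H x)

/-- families of anticommuting complex structures -/
structure CliffFam (m : ℕ) (J : ℕ → V →L[ℝ] V) : Prop where
  zero : ∀ a, J 0 a = a
  sq : ∀ s, 1 ≤ s → s ≤ m → ∀ a, J s (J s a) = -a
  anti : ∀ s t, 1 ≤ s → s ≤ m → 1 ≤ t → t ≤ m → s ≠ t → ∀ a, J s (J t a) = -J t (J s a)

/-- conjugate family -/
noncomputable def bar (J : ℕ → V →L[ℝ] V) (s : ℕ) : V →L[ℝ] V := if s = 0 then J 0 else -J s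

theorem CliffFam.rel1 {J : ℕ → V →L[ℝ] V} (h : CliffFam m J) (hp : p < m) :
    CliffRel (fun s : Fin (p + 1) => J s) (fun s : Fin (p + 1) => bar J s) := by
  intro s t a
  have hs := s.2
  have ht := t.2
  simp only [bar]
  by_cases hst : s = t
  · subst hst
    rw [if_pos rfl]
    by_cases h0 : (s : ℕ) = 0
    · simp [h0, h.zero, two_smul]
    · simp [h0, h.sq s (by omega) (by omega), two_smul]
  · have hst' : (s : ℕ) ≠ t := fun e => hst (Fin.ext e)
    rw [if_neg hst]
    by_cases h0 : (s : ℕ) = 0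
    · have : (t : ℕ) ≠ 0 := by omega
      rw [if_neg this, if_pos h0, h0]
      simp [h.zero]
    · by_cases h1 : (t : ℕ) = 0
      · rw [if_pos h1, if_neg h0, h1]
        simp [h.zero]
      · rw [if_neg h1, if_neg h0]
        simp [h.anti s t (by omega) (by omega) (by omega) (by omega) hst']

theorem CliffFam.rel2 {J : ℕ → V →L[ℝ] V} (h : CliffFam m J) (hp : p < m) :
    CliffRel (fun s : Fin (p + 1) => bar J s) (fun s : Fin (p + 1) => J s) := by
  intro s t a
  have hs := s.2
  have ht := t.2
  simp only [bar]
  by_cases hst : s = t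
  · subst hst
    rw [if_pos rfl]
    by_cases h0 : (s : ℕ) = 0
    · simp [h0, h.zero, two_smul]
    · simp [h0, h.sq s (by omega) (by omega), two_smul]
  · have hst' : (s : ℕ) ≠ t := fun e => hst (Fin.ext e)
    rw [if_neg hst]
    by_cases h0 : (s : ℕ) = 0
    · have : (t : ℕ) ≠ 0 := by omega
      rw [if_neg this, if_pos h0, h0]
      simp [h.zero]
    · by_cases h1 : (t : ℕ) = 0
      · rw [if_pos h1, if_neg h0, h1]
        simp [h.zero]
      · rw [if_neg h1, if_neg h0]
        simp [h.anti s t (by omega) (by omega) (by omega) (by omega) hst']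

theorem xqJ_smooth (hD : IsOpen D) (hDr : ∀ z ∈ D, reflD p z ∈ D) (J : ℕ → V →L[ℝ] V)
    {H : (Fin (p + 1) → ℝ) × ℝ → V} (hH : ES p D H) (t : Fin (m + 1)) :
    ContDiffOn ℝ ∞ (fun x => J t (xqpart m p x t • Lf m p H x)) (Om m p D) :=
  (J t).contDiff.comp_contDiffOn (xq_smooth (smooth_lift hD hDr hH) t)

theorem fk_smooth (hD : IsOpen D) (hDr : ∀ z ∈ D, reflD p z ∈ D) (J : ℕ → V →L[ℝ] V)
    {F H : (Fin (p + 1) → ℝ) × ℝ → V} (hF : ES p D F) (hH : ES p D H) :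
    ContDiffOn ℝ ∞ (fk m p J F H) (Om m p D) :=
  (smooth_lift hD hDr hF).add (ContDiffOn.sum fun t _ => xqJ_smooth hD hDr J hH t)

theorem lapF_fk (hD : IsOpen D) (hDr : ∀ z ∈ D, reflD p z ∈ D) (hp : p < m) {J : ℕ → V →L[ℝ] V}
    (hJ : CliffFam m J) {F H : (Fin (p + 1) → ℝ) × ℝ → V} (hF : ES p D F) (hH : ES p D H)
    (a : ∀ z ∈ D, ∑ s : Fin (p + 1), J s (pdSx p s F z) = z.2 ^ 2 • T1 p H z + H z)
    (b : ∀ z ∈ D, ∑ s : Fin (p + 1), bar J s (pdSx p s H z) = (-1 : ℝ) • T1 p F z) (k : ℕ)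
    {x : Fin (m + 1) → ℝ} (hx : x ∈ Om m p D) :
    lapF m (fk m p J ((T1 p)^[k] F) ((T1 p)^[k] H)) x =
      (((m - p : ℕ) : ℝ) - (2 * (k : ℝ) + 1)) • fk m p J ((T1 p)^[k + 1] F) ((T1 p)^[k + 1] H) x := by
  have hΩ := isOpen_Om (m := m) hD
  have hFk := hF.iter hD hDr k
  have hHk := hH.iter hD hDr k
  have e1 : lapF m (fk m p J ((T1 p)^[k] F) ((T1 p)^[k] H)) x = _ :=
    lapF_add hΩ (smooth_lift hD hDr hFk) (ContDiffOn.sum fun t _ => xqJ_smooth hD hDr J hHk t) hx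
  rw [e1, lapF_sum hΩ (fun t => xqJ_smooth hD hDr J hHk t) hx]
  have e2 : ∀ t : Fin (m + 1), lapF m (fun x => J t (xqpart m p x t • Lf m p ((T1 p)^[k] H) x)) x =
      (((m - p : ℕ) : ℝ) - (2 * (k : ℝ) + 1)) • J t (xqpart m p x t • Lf m p (T1 p ((T1 p)^[k] H)) x) := by
    intro t
    rw [lapF_clm hΩ (xq_smooth (smooth_lift hD hDr hHk) t) _ hx, lapF_xq_lift hD hDr hp hHk hx t,
      ← map_smul]
    congr 1
    have := lap_Hk hD hDr (hJ.rel1 hp) hF hH a b k hx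
    simp only [Lf] at this ⊢
    rw [this]
    module
  simp only [e2, Function.iterate_succ_apply']
  rw [lapF_lift hD hDr hp hFk hx, fk, smul_add, Finset.smul_sum]
  congr 1
  have := lap_Fk hD hDr (hJ.rel2 hp) hF hH a b k hx
  simp only [Lf] at this ⊢
  rw [this]
  module

end T


section T
variable {V : Type*} [NormedAddCommGroup V] [NormedSpace ℝ V] {m p : ℕ}

open ContDiff

theorem CliffFam.sqE {J : ℕ → V →L[ℝ] V} (h : CliffFam m J) (w : Fin (m + 1) → ℝ)
    (hw : ∀ s : Fin (m + 1), (s : ℕ) = 0 → w s = 0) (a : V) :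
    ∑ s : Fin (m + 1), J s (∑ t : Fin (m + 1), J t ((w s * w t) • a)) = -((∑ s, w s ^ 2) • a) := by
  have h1 : (2 : ℝ) • ∑ s : Fin (m + 1), J s (∑ t : Fin (m + 1), J t ((w s * w t) • a)) =
      (2 : ℝ) • (-((∑ s, w s ^ 2) • a)) := by
    have e1 : ∑ s : Fin (m + 1), J s (∑ t : Fin (m + 1), J t ((w s * w t) • a)) =
        ∑ s : Fin (m + 1), ∑ t : Fin (m + 1), (w s * w t) • J s (J t a) := by
      simp only [map_sum, map_smul]
    have e2 : ∑ s : Fin (m + 1), J s (∑ t : Fin (m + 1), J t ((w s * w t) • a)) =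
        ∑ s : Fin (m + 1), ∑ t : Fin (m + 1), (w s * w t) • J t (J s a) := by
      rw [e1, Finset.sum_comm]
      refine Finset.sum_congr rfl fun s _ => Finset.sum_congr rfl fun t _ => ?_
      rw [mul_comm]
    rw [two_smul]
    nth_rewrite 1 [e1]
    rw [e2, ← Finset.sum_add_distrib]
    have e3 : ∀ s t : Fin (m + 1), (w s * w t) • J s (J t a) + (w s * w t) • J t (J s a) =
        if s = t then (-2 * w s ^ 2) • a else 0 := by
      intro s t
      have hs := s.2
      have ht := t.2
      by_cases h0 : (s : ℕ) = 0
      · rw [hw s h0]; simp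
      by_cases h0' : (t : ℕ) = 0
      · rw [hw t h0']
        rw [if_neg (fun e => h0 (by rw [e]; exact h0'))]
        simp
      split_ifs with hst
      · subst hst
        rw [h.sq s (by omega) (by omega)]
        module
      · have hst' : (s : ℕ) ≠ t := fun e => hst (Fin.ext e)
        rw [h.anti s t (by omega) (by omega) (by omega) (by omega) hst']
        module
    simp only [← Finset.sum_add_distrib, e3]
    simp only [Finset.sum_ite_eq, Finset.mem_univ, if_true, ← Finset.sum_smul, ← Finset.mul_sum]
    module
  have := congrArg (fun y => (2 : ℝ)⁻¹ • y) h1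
  simpa [smul_smul] using this

variable {D : Set ((Fin (p + 1) → ℝ) × ℝ)} [CompleteSpace V]

theorem dirac_fk (hD : IsOpen D) (hDr : ∀ z ∈ D, reflD p z ∈ D) (hp : p < m) {J : ℕ → V →L[ℝ] V}
    (hJ : CliffFam m J) {F H : (Fin (p + 1) → ℝ) × ℝ → V} (hF : ES p D F) (hH : ES p D H) {c : ℝ}
    (a : ∀ z ∈ D, ∑ s : Fin (p + 1), J s (pdSx p s F z) = z.2 ^ 2 • T1 p H z + c • H z)
    (b : ∀ z ∈ D, ∑ s : Fin (p + 1), bar J s (pdSx p s H z) = (-1 : ℝ) • T1 p F z)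
    {x : Fin (m + 1) → ℝ} (hx : x ∈ Om m p D) :
    ∑ s : Fin (m + 1), J s (pdF m s (fk m p J F H) x) = (c - ((m - p : ℕ) : ℝ)) • Lf m p H x := by
  have hΩ := isOpen_Om (m := m) hD
  have e0 : ∀ s, pdF m s (fk m p J F H) x = pdF m s (Lf m p F) x +
      (∑ t : Fin (m + 1), J t (xqpart m p x t • pdF m s (Lf m p H) x) +
        (if (s : ℕ) ≤ p then (0 : ℝ) else 1) • J s (Lf m p H x)) := by
    intro s
    have e1 : pdF m s (fk m p J F H) x = _ :=
      pdF_add hΩ (smooth_lift hD hDr hF) (ContDiffOn.sum fun t _ => xqJ_smooth hD hDr J hH t) s hx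
    rw [e1, pdF_sum hΩ (fun t => xqJ_smooth hD hDr J hH t) s hx]
    congr 1
    have e2 : ∀ t : Fin (m + 1), pdF m s (fun x => J t (xqpart m p x t • Lf m p H x)) x =
        J t (xqpart m p x t • pdF m s (Lf m p H) x) +
          (if s = t ∧ ¬ (s : ℕ) ≤ p then (1 : ℝ) else 0) • J t (Lf m p H x) := by
      intro t
      rw [pdF_clm hΩ (xq_smooth (smooth_lift hD hDr hH) t) _ s hx,
        pdF_xq hΩ (smooth_lift hD hDr hH) s t hx, map_add, map_smul (J t) (ite _ _ _)]
    simp only [e2]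
    rw [Finset.sum_add_distrib]
    congr 1
    rw [Finset.sum_eq_single s]
    · by_cases h : (s : ℕ) ≤ p <;> simp [h]
    · intro t _ ht; simp [Ne.symm ht]
    · simp
  simp only [e0, map_add]
  rw [Finset.sum_add_distrib, Finset.sum_add_distrib]
  have S1 : ∑ s : Fin (m + 1), J s (pdF m s (Lf m p F) x) =
      rad m p x ^ 2 • Lf m p (T1 p H) x + c • Lf m p H x +
        ∑ s : Fin (m + 1), xqpart m p x s • J s (Lf m p (T1 p F) x) := by
    rw [sum_split hp]
    congr 1
    · have := a _ hx
      simp only at this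
      simp only [Lf]
      rw [← this]
      refine Finset.sum_congr rfl fun s _ => ?_
      have := pdF_lift_lt hD hDr hp hF hx s
      simp only [Lf] at this
      rw [Fin.val_castLE]
      exact congrArg _ this
    · refine Finset.sum_congr rfl fun s _ => ?_
      split_ifs with hs
      · simp [xqpart, hs]
      · rw [pdF_lift_gt hD hDr hF hx hs, map_smul]
  have S2 : ∑ s : Fin (m + 1), J s ((if (s : ℕ) ≤ p then (0 : ℝ) else 1) • J s (Lf m p H x)) =
      -(((m - p : ℕ) : ℝ) • Lf m p H x) := by
    rw [← card_gt hp, Finset.sum_smul, ← Finset.sum_neg_distrib]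
    refine Finset.sum_congr rfl fun s _ => ?_
    have hs2 := s.2
    split_ifs with hs
    · simp
    · rw [one_smul, one_smul, hJ.sq s (by omega) (by omega)]
  have S3 : ∑ s : Fin (m + 1), J s (∑ t : Fin (m + 1), J t (xqpart m p x t • pdF m s (Lf m p H) x)) =
      -∑ s : Fin (m + 1), xqpart m p x s • J s (Lf m p (T1 p F) x) -
        rad m p x ^ 2 • Lf m p (T1 p H) x := by
    rw [sum_split hp, sub_eq_add_neg]
    congr 1
    · have e4 : ∀ s : Fin (p + 1), J (Fin.castLE (by omega : p + 1 ≤ m + 1) s : Fin (m + 1)) (∑ t : Fin (m + 1), J t (xqpart m p x t •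
          pdF m (Fin.castLE (by omega) s) (Lf m p H) x)) =
          ∑ t : Fin (m + 1), xqpart m p x t • J t (bar J s (Lf m p (pdSx p s H) x)) := by
        intro s
        rw [map_sum]
        refine Finset.sum_congr rfl fun t _ => ?_
        rw [pdF_lift_lt hD hDr hp hH hx s, map_smul, map_smul, Fin.val_castLE]
        have hs2 := s.2
        have ht2 := t.2
        by_cases ht : (t : ℕ) ≤ p
        · simp [xqpart, ht]
        · congr 1
          unfold bar
          split_ifs with h0
          · rw [h0, hJ.zero, hJ.zero]
          · rw [hJ.anti s t (by omega) (by omega) (by omega) (by omega) (by omega)]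
            simp
      rw [Finset.sum_congr rfl fun s _ => e4 s, Finset.sum_comm, ← Finset.sum_neg_distrib]
      refine Finset.sum_congr rfl fun t _ => ?_
      rw [← Finset.smul_sum, ← map_sum]
      have := b _ hx
      simp only [Lf]
      rw [this]
      simp
    · have e5 := hJ.sqE (xqpart m p x) (fun s hs => by simp [xqpart, hs]) (Lf m p (T1 p H) x)
      rw [rad_sq, ← e5]
      refine Finset.sum_congr rfl fun s _ => ?_
      split_ifs with hs
      · simp [xqpart, hs]
      · rw [pdF_lift_gt hD hDr hH hx hs]
        simp only [smul_smul, mul_comm]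
  rw [S1, S2, S3]
  module

end T

section Fin
variable {A : Type*} [NormedAddCommGroup A] [NormedSpace ℝ A] [Mul A] [One A]

open ContDiff

/-- left multiplication by `v s` -/
theorem exists_J {conj : A → A} (H : IsAltStarAlg A conj) (v : ℕ → A) :
    ∃ J : ℕ → A →L[ℝ] A, ∀ s a, J s a = v s * a := by
  have := H.finDim
  refine ⟨fun s => LinearMap.toContinuousLinearMap
    { toFun := fun a => v s * a
      map_add' := fun a b => H.mul_add' _ _ _
      map_smul' := fun r a => H.mul_smul' _ _ _ }, fun s a => rfl⟩

theorem neg_mul_alt {conj : A → A} (H : IsAltStarAlg A conj) (a b : A) : (-a) * b = -(a * b) := by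
  have := H.smul_mul' (-1) a b
  simpa using this

theorem mul_neg_alt {conj : A → A} (H : IsAltStarAlg A conj) (a b : A) : a * (-b) = -(a * b) := by
  have := H.mul_smul' (-1) a b
  simpa using this

theorem zero_mul_alt {conj : A → A} (H : IsAltStarAlg A conj) (b : A) : (0 : A) * b = 0 := by
  have := H.smul_mul' 0 0 b
  simpa using this

theorem cliffFam_J {conj : A → A} (H : IsAltStarAlg A conj) {v : ℕ → A} {m : ℕ}
    (hv : IsHypBasis A conj v m) {J : ℕ → A →L[ℝ] A} (hJ : ∀ s a, J s a = v s * a) : CliffFam m J := by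
  refine ⟨?_, ?_, ?_⟩
  · intro a; rw [hJ, hv.v_zero, H.one_mul']
  · intro s h1 h2 a
    have e1 : conj (v s) = -v s := eq_neg_of_add_eq_zero_right (hv.trace_zero s h1 h2)
    have e2 := hv.norm_one s h1 h2
    rw [e1, mul_neg_alt H] at e2
    have e3 : v s * v s = -1 := by rw [← e2, neg_neg]
    rw [hJ, hJ, H.alt_left, e3, neg_mul_alt H, H.one_mul']
  · intro s t h1 h2 h3 h4 hst a
    have e := H.alt_left (v s + v t) a
    simp only [H.add_mul', H.mul_add', ← H.alt_left] at e
    have e5 : v s * v t * a + v t * v s * a = 0 := by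
      rw [← H.add_mul', hv.anticomm s t h1 h2 h3 h4 hst, neg_add_cancel, zero_mul_alt H]
    rw [hJ, hJ, hJ, hJ, eq_neg_iff_add_eq_zero, ← e5]
    have e6 : v s * (v s * a) + v s * (v t * a) + (v t * (v s * a) + v t * (v t * a)) -
      (v s * (v s * a) + v t * (v t * a)) = v s * (v s * a) + v s * v t * a + (v t * v s * a + v t * (v t * a)) -
      (v s * (v s * a) + v t * (v t * a)) := by rw [e]
    calc v s * (v t * a) + v t * (v s * a) = _ := by abel
      _ = _ := e6
      _ = _ := by abel

theorem emb_mul {conj : A → A} (H : IsAltStarAlg A conj) {v : ℕ → A} {m : ℕ}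
    {J : ℕ → A →L[ℝ] A} (hJ : ∀ s a, J s a = v s * a) (w : Fin (m + 1) → ℝ) (a : A) :
    emb v m w * a = ∑ t : Fin (m + 1), J t (w t • a) := by
  let R : A →+ A := ⟨⟨fun b => b * a, zero_mul_alt H a⟩, fun b c => H.add_mul' b c a⟩
  have : emb v m w * a = R (emb v m w) := rfl
  rw [this, emb, map_sum]
  refine Finset.sum_congr rfl fun t _ => ?_
  change (w t • v t) * a = _
  rw [hJ, H.smul_mul', H.mul_smul']

theorem one_ne_zero_alt {conj : A → A} (H : IsAltStarAlg A conj) : (1 : A) ≠ 0 := by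
  intro h
  have : Subsingleton A := ⟨fun a b => by
    rw [← H.one_mul' a, ← H.one_mul' b, h, zero_mul_alt H, zero_mul_alt H]⟩
  have h2 := H.one_lt_finrank
  rw [Module.finrank_zero_of_subsingleton] at h2
  omega

theorem mem_Sph {conj : A → A} (H : IsAltStarAlg A conj) {v : ℕ → A} {m p : ℕ}
    (hv : IsHypBasis A conj v m) (w : Fin (m + 1) → ℝ) :
    w ∈ Sph v m p ↔ (∀ s : Fin (m + 1), (s : ℕ) ≤ p → w s = 0) ∧ ∑ s, w s ^ 2 = 1 := by
  obtain ⟨J, hJ⟩ := exists_J H v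
  have hC := cliffFam_J H hv hJ
  unfold Sph
  refine and_congr_right fun h => ?_
  have e : emb v m w * emb v m w = -((∑ s, w s ^ 2) • (1 : A)) := by
    have h1 := hC.sqE w (fun s hs => h s (by omega)) 1
    rw [← h1, emb_mul H hJ]
    refine Finset.sum_congr rfl fun s _ => ?_
    congr 1
    rw [emb, Finset.smul_sum]
    refine Finset.sum_congr rfl fun t _ => ?_
    rw [hJ, H.mul_smul', H.mul_one', smul_smul]
  rw [e, neg_inj]
  constructor
  · intro h2
    have h3 : ((∑ s, w s ^ 2) - 1) • (1 : A) = 0 := by rw [sub_smul, h2, one_smul, sub_self]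
    have := (smul_eq_zero.1 h3).resolve_right (one_ne_zero_alt H)
    linarith
  · intro h2; rw [h2, one_smul]

theorem projP_pt {m p : ℕ} (hp : p < m) {w : Fin (m + 1) → ℝ}
    (hw : ∀ s : Fin (m + 1), (s : ℕ) ≤ p → w s = 0) (y : Fin (p + 1) → ℝ) (r : ℝ) :
    projP m p (pt m p w y r) = y := by
  ext s
  have h1 : (s : ℕ) < m + 1 := by omega
  have h2 : (s : ℕ) ≤ p := by omega
  simp [projP, pt, injP, h1, hw ⟨s, h1⟩ h2]
  intro h
  omega

theorem xqpart_pt {m p : ℕ} {w : Fin (m + 1) → ℝ}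
    (hw : ∀ s : Fin (m + 1), (s : ℕ) ≤ p → w s = 0) (y : Fin (p + 1) → ℝ) (r : ℝ) (s : Fin (m + 1)) :
    xqpart m p (pt m p w y r) s = r * w s := by
  unfold xqpart
  split_ifs with h
  · rw [hw s h, mul_zero]
  · have : ¬ (s : ℕ) < p + 1 := by omega
    simp [pt, injP, this]

theorem rad_pt {m p : ℕ} {w : Fin (m + 1) → ℝ}
    (hw : ∀ s : Fin (m + 1), (s : ℕ) ≤ p → w s = 0) (hw1 : ∑ s, w s ^ 2 = 1)
    (y : Fin (p + 1) → ℝ) (r : ℝ) : rad m p (pt m p w y r) = |r| := by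
  simp only [rad, xqpart_pt hw, mul_pow, ← Finset.mul_sum, hw1, mul_one]
  exact Real.sqrt_sq_eq_abs r

theorem pt_eq {m p : ℕ} (x : Fin (m + 1) → ℝ) {w : Fin (m + 1) → ℝ}
    (h : ∀ s, rad m p x * w s = xqpart m p x s) : pt m p w (projP m p x) (rad m p x) = x := by
  ext s
  simp only [pt, Pi.add_apply, Pi.smul_apply, smul_eq_mul, h, injP, projP, xqpart]
  by_cases h1 : (s : ℕ) ≤ p
  · have h2 : (s : ℕ) < p + 1 := by omega
    simp [h1, h2]
    intro h
    have := s.2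
    omega
  · have h2 : ¬ (s : ℕ) < p + 1 := by omega
    simp [h1, h2]

/-- a point of `𝕊` adapted to `x` -/
theorem exists_dir {conj : A → A} (H : IsAltStarAlg A conj) {v : ℕ → A} {m p : ℕ}
    (hv : IsHypBasis A conj v m) (hp : p < m) (x : Fin (m + 1) → ℝ) :
    ∃ w ∈ Sph v m p, ∀ s, rad m p x * w s = xqpart m p x s := by
  by_cases h0 : rad m p x = 0
  · refine ⟨Pi.single (Fin.last m) 1, (mem_Sph H hv _).2 ⟨?_, ?_⟩, ?_⟩
    · intro s hs
      rw [Pi.single_apply, if_neg]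
      intro h
      rw [h, Fin.val_last] at hs
      omega
    · simp [Pi.single_apply]
    · intro s; rw [h0, zero_mul, xqpart_of_rad h0]
  · refine ⟨normq m p x, (mem_Sph H hv _).2 ⟨?_, ?_⟩, ?_⟩
    · intro s hs; simp [normq, xqpart, hs]
    · simp only [normq, Pi.smul_apply, smul_eq_mul, mul_pow, ← Finset.mul_sum, ← rad_sq]
      field_simp
    · intro s
      simp only [normq, Pi.smul_apply, smul_eq_mul]
      field_simp

theorem OmegaD_sub {conj : A → A} (H : IsAltStarAlg A conj) {v : ℕ → A} {m p : ℕ}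
    (hv : IsHypBasis A conj v m) (hp : p < m) {D : Set ((Fin (p + 1) → ℝ) × ℝ)}
    (hDr : ∀ z ∈ D, reflD p z ∈ D) {x : Fin (m + 1) → ℝ} (hx : x ∈ OmegaD v m p D) :
    x ∈ Om m p D := by
  obtain ⟨w, hw, z, hz, rfl⟩ := hx
  obtain ⟨h1, h2⟩ := (mem_Sph H hv w).1 hw
  rw [Om, Set.mem_ofPred_eq, projP_pt hp h1, rad_pt h1 h2]
  rcases abs_choice z.2 with h | h
  · rw [h]; exact hz
  · rw [h]; exact hDr z hz

theorem emb_normq {conj : A → A} (H : IsAltStarAlg A conj) {v : ℕ → A} {m p : ℕ}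
    {J : ℕ → A →L[ℝ] A} (hJ : ∀ s a, J s a = v s * a) (x : Fin (m + 1) → ℝ) (a : A) :
    emb v m (normq m p x) * (rad m p x • a) = ∑ t : Fin (m + 1), J t (xqpart m p x t • a) := by
  rw [emb_mul H hJ]
  refine Finset.sum_congr rfl fun t _ => ?_
  rw [smul_smul]
  congr 2
  by_cases h0 : rad m p x = 0
  · rw [h0, mul_zero, xqpart_of_rad h0]
  · simp only [normq, Pi.smul_apply, smul_eq_mul]
    field_simp

end Fin

/-- For `f = F₁ + ωF₂ ∈ GSR(Ω_D)` and `k ∈ ℕ`: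
`Δ_x^k f = C_q(k)(A_k + ω B_k)` on `Ω_D`, and
`D_x Δ_x^k f = -C_q(k+1) B_k / r` (for `r ≠ 0`), where
`A_k = ((1/r)∂_r)^k F₁`, `B_k = (∂_r ∘ (1/r))^k F₂` and
`C_q(k) = (q-1)(q-3)⋯(q-2k+1)`, `C_q(0) = 1`. -/
theorem iterated_laplacian_gsr
    {A : Type*} [NormedAddCommGroup A] [NormedSpace ℝ A] [Mul A] [One A]
    (conj : A → A) (H : IsAltStarAlg A conj)
    (v : ℕ → A) (m p : ℕ) (hv : IsHypBasis A conj v m) (hp : p < m)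
    (D : Set ((Fin (p + 1) → ℝ) × ℝ)) (hD : IsOpen D)
    (hDrefl : ∀ z ∈ D, reflD p z ∈ D)
    (F₁ F₂ : (Fin (p + 1) → ℝ) × ℝ → A) (hstem : IsStem p D F₁ F₂)
    (hF₁ : ContDiffOn ℝ 1 F₁ D) (hF₂ : ContDiffOn ℝ 1 F₂ D)
    (f : (Fin (m + 1) → ℝ) → A) (hind : Induced v m p D F₁ F₂ f)
    (hCR : StemCR v p D F₁ F₂) (k : ℕ) :
    (∀ x ∈ OmegaD v m p D,
      lapIterF m k f x =
        cq (m - p) k •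
          (((T1 p)^[k] F₁) (projP m p x, rad m p x) +
            emb v m (normq m p x) * ((T2 p)^[k] F₂) (projP m p x, rad m p x))) ∧
    (∀ x ∈ OmegaD v m p D, rad m p x ≠ 0 →
      Dop v m 0 m (lapIterF m k f) x =
        -(cq (m - p) (k + 1) / rad m p x) •
          ((T2 p)^[k] F₂) (projP m p x, rad m p x)) := by
  have := H.finDim
  have : CompleteSpace A := FiniteDimensional.complete ℝ A
  obtain ⟨J, hJ⟩ := exists_J H v
  have hC := cliffFam_J H hv hJ
  have c1 : ∀ z ∈ D, ∑ s : Fin (p + 1), J s (pdSx p s F₁ z) = pdSr p F₂ z := by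
    intro z hz
    have := (hCR z hz).1
    rw [← sub_eq_zero, ← this, DopSx]
    simp only [hJ]
  have c2 : ∀ z ∈ D, ∑ s : Fin (p + 1), bar J s (pdSx p s F₂ z) = -pdSr p F₁ z := by
    intro z hz
    have := (hCR z hz).2
    rw [eq_neg_iff_add_eq_zero, ← this, DbaropSx, Fin.sum_univ_succ, Fin.sum_univ_succ]
    simp [bar, hJ, hv.v_zero, H.one_mul', Finset.sum_neg_distrib, sub_eq_add_neg]
  obtain ⟨K, hF, hK, hF₂K, a, b⟩ := stem_system hD hDrefl (hC.rel1 hp) (hC.rel2 hp) hF₁ hF₂ hstem c1 c2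
  have hΩ : IsOpen (Om m p D) := isOpen_Om hD
  have hf : ∀ x ∈ Om m p D, f x = fk m p J F₁ K x := by
    intro x hx
    obtain ⟨w, hw, hwx⟩ := exists_dir H hv hp x
    have h1 := hind w hw _ hx
    simp only [] at h1
    rw [pt_eq x hwx] at h1
    rw [h1, hF₂K _ hx, emb_mul H hJ, fk]
    simp only [smul_smul, mul_comm (w _) _, hwx]
    rfl
  have hlap : ∀ k : ℕ, ∀ x ∈ Om m p D,
      lapIterF m k f x = cq (m - p) k • fk m p J ((T1 p)^[k] F₁) ((T1 p)^[k] K) x := by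
    intro k
    induction k with
    | zero => intro x hx; simpa [lapIterF, cq] using hf x hx
    | succ k ih =>
      intro x hx
      have h1 : lapIterF m (k + 1) f x = lapF m (lapIterF m k f) x := by
        simp only [lapIterF, Function.iterate_succ_apply']
      rw [h1, lapF_congr hΩ ih hx]
      have h2 := lapF_clm hΩ (fk_smooth hD hDrefl J (hF.iter hD hDrefl k) (hK.iter hD hDrefl k))
        (cq (m - p) k • ContinuousLinearMap.id ℝ A) hx
      simp only [smul_apply, ContinuousLinearMap.id_apply] at h2
      rw [h2, lapF_fk hD hDrefl hp hC hF hK a b k hx, smul_smul]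
      congr 1
      rw [cq, cq, Finset.prod_range_succ]
  have hT2 := T2_iter hD hDrefl hK hF₂K k
  refine ⟨fun x hx => ?_, fun x hx hr => ?_⟩
  · have hx' := OmegaD_sub H hv hp hDrefl hx
    rw [hlap k x hx', hT2 _ hx', emb_normq H hJ]
    rfl
  · have hx' := OmegaD_sub H hv hp hDrefl hx
    have hfs := fk_smooth (m := m) hD hDrefl J (hF.iter hD hDrefl k) (hK.iter hD hDrefl k)
    have h1 : Dop v m 0 m (lapIterF m k f) x =
        cq (m - p) k • ∑ s : Fin (m + 1), J s (pdF m s (fk m p J ((T1 p)^[k] F₁) ((T1 p)^[k] K)) x) := by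
      rw [Dop, Finset.smul_sum]
      refine Finset.sum_congr rfl fun s _ => ?_
      rw [if_pos ⟨Nat.zero_le _, Nat.lt_succ_iff.1 s.2⟩, ← map_smul, hJ, pdF_congr hΩ (hlap k) s hx']
      have h2 := pdF_clm hΩ hfs (cq (m - p) k • ContinuousLinearMap.id ℝ A) s hx'
      simp only [smul_apply, ContinuousLinearMap.id_apply] at h2
      rw [h2]
    rw [h1, dirac_fk hD hDrefl hp hC (hF.iter hD hDrefl k) (hK.iter hD hDrefl k)
      (CRk_a hD hDrefl (fun s : Fin (p + 1) => J s) hF hK a k)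
      (CRk_b hD hDrefl (fun s : Fin (p + 1) => bar J s) hF hK b k) hx', hT2 _ hx', smul_smul, smul_smul]
    change _ = _ • (T1 p)^[k] K (projP m p x, rad m p x)
    rw [Lf]
    congr 1
    have h3 : cq (m - p) (k + 1) = cq (m - p) k * (((m - p : ℕ) : ℝ) - (2 * (k : ℝ) + 1)) := by
      rw [cq, cq, Finset.prod_range_succ]
    rw [h3]
    field_simp
    ring

end GPSM
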